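/- arXiv:2604.10682 — 3 statements merged into one kernel-verified Lean document; each statement's English description precedes it below -/
import Mathlib

section
/- Let d ≥ 1 be an integer, let σ > −d be a real number, let λ > 0, ε > 0, C₀ ≥ 0, and let k ∈ ℕ. Suppose F : ℝ^d → E (E a finite-dimensional complex normed space) is (d + ⌊σ⌋ + 1)-times continuously differentiable on ℝ^d \ {0} and satisfies ‖∇ⁿF(ξ)‖ ≤ C₀ |ξ|^{σ−n} exp(−λ^ε |ξ|^ε) for every integer 0 ≤ n ≤ d + ⌊σ⌋ + 1 and every ξ ≠ 0. Define G(x) := ∫_{ℝ^d} F(ξ) e^{i x·ξ} dξ. Then G is k-times continuously differentiable on ℝ^d and there is a constant C, depending only on d, k, σ and ε, such that ‖∇^k G(x)‖ ≤ C C₀ λ^{−d−k−σ} (1 + |x|/λ)^{−(d+σ)} for all x ∈ ℝ^d. -/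
open MeasureTheory Set
open scoped InnerProductSpace

open Metric Module
open scoped ContDiff FourierTransform

/-!
Translating `F` by a vector `h` that is half a period for the frequency `w` flips the sign of the
phase, so the Fourier transform of the iterated difference `Δ_h^N F` at `w` is `(-2) ^ N • 𝓕 F w`
and `𝓕 F w` is controlled by `‖Δ_h^N F‖_{L¹}` with `‖h‖ = 1 / (2 ‖w‖)`. For a symbol of order `σ`
this norm is `O(‖h‖ ^ (d + σ))`: where `‖ξ‖ < 2 N ‖h‖` the size of `F` suffices, and farther out the
`N`-th derivative is integrable because `N > d + σ`. Differences thus replace the integration by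
parts that the singularity at the origin obstructs.

Differentiating `𝓕 F` `k` times multiplies `F` by `k` linear forms and gives a symbol of order
`σ + k`. Part of the exponential weight absorbs the extra factor `‖ξ‖ ^ k` at the price of
`lam ^ (-k)`, which leaves a symbol of order `σ` for the argument above; for `‖x‖ ≤ lam` the `L¹`
norm of the symbol already gives the bound.
-/

section ForwardDifference

variable {V E : Type*} [NormedAddCommGroup V] [NormedSpace ℝ V]
  [NormedAddCommGroup E] [NormedSpace ℝ E]

lemma norm_iterate_fwdDiff_one_le_of_hasDerivAt {N : ℕ} {f : ℕ → ℝ → E} {a B : ℝ}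
    (hf : ∀ j < N, ∀ t ∈ Icc a (a + N), HasDerivAt (f j) (f (j + 1) t) t)
    (hB : ∀ t ∈ Icc a (a + N), ‖f N t‖ ≤ B) :
    ‖(fwdDiff (1 : ℝ))^[N] (f 0) a‖ ≤ B := by
  induction N generalizing f with
  | zero => simpa using hB a (by simp)
  | succ N ih =>
    push_cast at hf hB
    rw [Function.iterate_succ_apply]
    refine ih (f := fun j => fwdDiff 1 (f j)) (fun j hj t ht => ?_) fun t ht => ?_
    · have hright := hf j (by omega) (t + 1) ⟨by linarith [ht.1], by linarith [ht.2]⟩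
      have hleft := hf j (by omega) t ⟨by linarith [ht.1], by linarith [ht.2]⟩
      exact (hright.comp_add_const t 1).sub hleft
    · have hsub : Icc t (t + 1) ⊆ Icc a (a + (N + 1)) :=
        Icc_subset_Icc ht.1 (by linarith [ht.2])
      simpa [fwdDiff] using (convex_Icc t (t + 1)).norm_image_sub_le_of_norm_hasDerivWithin_le
        (fun s hs => (hf N (by omega) s (hsub hs)).hasDerivWithinAt)
        (fun s hs => hB s (hsub hs)) (x := t) (y := t + 1) (by simp) (by simp)

lemma hasDerivAt_iteratedFDerivWithin_const_apply {s : Set V} (hs : IsOpen s) {F : V → E}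
    {N : WithTop ℕ∞} (hF : ContDiffOn ℝ N F s) {j : ℕ} (hj : j < N) {ξ h : V} {t : ℝ}
    (ht : ξ + t • h ∈ s) :
    HasDerivAt (fun t : ℝ => iteratedFDerivWithin ℝ j F s (ξ + t • h) fun _ => h)
      (iteratedFDerivWithin ℝ (j + 1) F s (ξ + t • h) fun _ => h) t := by
  have hline : HasDerivAt (fun t : ℝ => ξ + t • h) h t := by
    simpa using ((hasDerivAt_id t).smul_const h).const_add ξ
  have hD := (hF.differentiableOn_iteratedFDerivWithin hj hs.uniqueDiffOn _ ht).hasFDerivWithinAt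
  rw [iteratedFDerivWithin_succ_apply_left]
  exact ((hD.hasFDerivAt (hs.mem_nhds ht)).continuousMultilinear_apply_const _).comp_hasDerivAt
    t hline

lemma norm_iterate_fwdDiff_le_mul_norm_pow {s : Set V} (hs : IsOpen s) {F : V → E} {N : ℕ}
    (hF : ContDiffOn ℝ N F s) {ξ h : V} {B : ℝ} (hξ : ∀ t ∈ Icc (0 : ℝ) N, ξ + t • h ∈ s)
    (hB : ∀ t ∈ Icc (0 : ℝ) N, ‖iteratedFDerivWithin ℝ N F s (ξ + t • h)‖ ≤ B) :
    ‖(fwdDiff h)^[N] F ξ‖ ≤ B * ‖h‖ ^ N := by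
  have hline : (fwdDiff h)^[N] F ξ = (fwdDiff (1 : ℝ))^[N]
      (fun t : ℝ => iteratedFDerivWithin ℝ 0 F s (ξ + t • h) fun _ => h) 0 := by
    simp [fwdDiff_iter_eq_sum_shift, Nat.cast_smul_eq_nsmul]
  rw [hline]
  refine norm_iterate_fwdDiff_one_le_of_hasDerivAt
    (f := fun j t => iteratedFDerivWithin ℝ j F s (ξ + t • h) fun _ => h)
    (fun j hj t ht => hasDerivAt_iteratedFDerivWithin_const_apply hs hF (mod_cast hj)
      (hξ t (by simpa using ht))) fun t ht => ?_
  simpa using ContinuousMultilinearMap.le_of_opNorm_le (hB t (by simpa using ht)) fun _ => h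

end ForwardDifference

section NormPower

open scoped Pointwise

variable {V : Type*} [NormedAddCommGroup V] [NormedSpace ℝ V] [FiniteDimensional ℝ V]
  [MeasurableSpace V] [BorelSpace V] {μ : Measure V} [μ.IsAddHaarMeasure] {s c ε : ℝ}

lemma integrable_norm_rpow_mul_exp_neg_mul_rpow [Nontrivial V] (hs : -(finrank ℝ V : ℝ) < s)
    (hε : 0 < ε) {b : ℝ} (hb : 0 < b) :
    Integrable (fun ξ : V => ‖ξ‖ ^ s * Real.exp (-b * ‖ξ‖ ^ ε)) μ := by
  refine (integrable_fun_norm_addHaar μ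
    (f := fun r : ℝ => r ^ s * Real.exp (-b * r ^ ε))).2 ?_
  refine (integrableOn_rpow_mul_exp_neg_mul_rpow (s := s + finrank ℝ V - 1) (by linarith)
    hε hb).congr_fun (fun r (hr : 0 < r) => ?_) measurableSet_Ioi
  have hpow : r ^ (finrank ℝ V - 1) * r ^ s = r ^ (s + finrank ℝ V - 1) := by
    rw [← Real.rpow_natCast, ← Real.rpow_add hr, Nat.cast_sub Module.finrank_pos]
    congr 1
    push_cast
    ring
  simp only [smul_eq_mul, ← mul_assoc, hpow]

lemma integrableOn_ball_norm_rpow [Nontrivial V] (hs : -(finrank ℝ V : ℝ) < s) (R : ℝ) :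
    IntegrableOn (fun ξ : V => ‖ξ‖ ^ s) (ball 0 R) μ := by
  have hexp := integrable_norm_rpow_mul_exp_neg_mul_rpow (μ := μ) hs one_pos one_pos
  refine (hexp.const_mul (Real.exp R)).integrableOn.mono'
    (measurable_norm.pow_const s).aestronglyMeasurable ?_
  filter_upwards [ae_restrict_mem measurableSet_ball] with ξ hξ
  rw [mem_ball_zero_iff] at hξ
  rw [Real.norm_of_nonneg (by positivity), mul_left_comm, ← Real.exp_add, Real.rpow_one]
  exact le_mul_of_one_le_right (by positivity) (Real.one_le_exp (by linarith))

lemma integrableOn_compl_ball_norm_rpow (hs : s < -(finrank ℝ V : ℝ)) {R : ℝ} (hR : 0 < R) :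
    IntegrableOn (fun ξ : V => ‖ξ‖ ^ s) (ball 0 R)ᶜ μ := by
  have hjap := integrable_one_add_norm (μ := μ) (r := -s) (by linarith)
  refine (hjap.const_mul ((R / (1 + R)) ^ s)).integrableOn.mono'
    (measurable_norm.pow_const s).aestronglyMeasurable ?_
  filter_upwards [ae_restrict_mem measurableSet_ball.compl] with ξ hξ
  have hRξ : R ≤ ‖ξ‖ := by simpa using hξ
  have hcmp : R / (1 + R) * (1 + ‖ξ‖) ≤ ‖ξ‖ := by
    rw [div_mul_eq_mul_div, div_le_iff₀ (by positivity)]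
    linarith
  rw [Real.norm_of_nonneg (by positivity), neg_neg,
    ← Real.mul_rpow (by positivity) (by positivity)]
  exact Real.rpow_le_rpow_of_nonpos (by positivity) hcmp
    (hs.le.trans (neg_nonpos.2 (Nat.cast_nonneg _)))

lemma setIntegral_smul_norm_rpow (s : ℝ) (S : Set V) (hc : 0 < c) :
    ∫ ξ in c • S, ‖ξ‖ ^ s ∂μ = c ^ (finrank ℝ V + s) * ∫ ξ in S, ‖ξ‖ ^ s ∂μ := by
  have hscale := Measure.setIntegral_comp_smul_of_pos μ (fun ξ : V => ‖ξ‖ ^ s) S hc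
  simp only [norm_smul, Real.norm_of_nonneg hc.le, Real.mul_rpow hc.le (norm_nonneg _),
    integral_const_mul, smul_eq_mul] at hscale
  rw [Real.rpow_add hc, Real.rpow_natCast, mul_assoc, hscale, mul_inv_cancel_left₀ (by positivity)]

lemma setIntegral_ball_norm_rpow_mul (s R : ℝ) (hc : 0 < c) :
    ∫ ξ in ball (0 : V) (c * R), ‖ξ‖ ^ s ∂μ =
      c ^ (finrank ℝ V + s) * ∫ ξ in ball (0 : V) R, ‖ξ‖ ^ s ∂μ := by
  rw [← setIntegral_smul_norm_rpow s _ hc, _root_.smul_ball hc.ne', smul_zero,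
    Real.norm_of_nonneg hc.le]

lemma setIntegral_compl_ball_norm_rpow_mul (s R : ℝ) (hc : 0 < c) :
    ∫ ξ in (ball (0 : V) (c * R))ᶜ, ‖ξ‖ ^ s ∂μ =
      c ^ (finrank ℝ V + s) * ∫ ξ in (ball (0 : V) R)ᶜ, ‖ξ‖ ^ s ∂μ := by
  have hball : c • (ball (0 : V) R)ᶜ = (ball 0 (c * R))ᶜ := by
    rw [← image_smul, image_compl_eq (MulAction.bijective₀ hc.ne'), image_smul,
      _root_.smul_ball hc.ne', smul_zero, Real.norm_of_nonneg hc.le]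
  rw [← setIntegral_smul_norm_rpow s _ hc, hball]

lemma integral_norm_rpow_mul_exp_neg_mul_rpow (s ε : ℝ) (hc : 0 < c) :
    ∫ ξ : V, ‖ξ‖ ^ s * Real.exp (-(c ^ ε * ‖ξ‖ ^ ε)) ∂μ =
      c ^ (-(finrank ℝ V : ℝ) - s) * ∫ ξ : V, ‖ξ‖ ^ s * Real.exp (-‖ξ‖ ^ ε) ∂μ := by
  have hscale := Measure.integral_comp_smul_of_nonneg μ
    (fun ξ : V => ‖ξ‖ ^ s * Real.exp (-‖ξ‖ ^ ε)) c (hR := hc.le)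
  simp only [norm_smul, Real.norm_of_nonneg hc.le, Real.mul_rpow hc.le (norm_nonneg _),
    mul_assoc, integral_const_mul, smul_eq_mul] at hscale
  rw [sub_eq_add_neg, Real.rpow_add hc, Real.rpow_neg hc.le, Real.rpow_neg hc.le s,
    Real.rpow_natCast, mul_right_comm, ← hscale]
  field_simp

end NormPower

lemma rpow_mul_exp_neg_rpow_le {p ε y : ℝ} (hp : 0 ≤ p) (hε : 0 < ε) (hy : 0 ≤ y) :
    y ^ p * Real.exp (-y ^ ε) ≤ (p / ε) ^ (p / ε) := by
  have hpow : (y ^ ε) ^ (p / ε) = y ^ p := by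
    rw [← Real.rpow_mul hy, mul_div_cancel₀ p hε.ne']
  have hexp := ProbabilityTheory.rpow_abs_le_mul_exp_abs (y ^ ε) (div_nonneg hp hε.le) one_ne_zero
  rw [abs_of_nonneg (by positivity), hpow, abs_one, div_one, one_mul] at hexp
  rwa [Real.exp_neg, ← div_eq_mul_inv, div_le_iff₀ (Real.exp_pos _)]

section Symbol

variable {V E : Type*} [NormedAddCommGroup V] [NormedSpace ℝ V]
  [NormedAddCommGroup E] [NormedSpace ℝ E]

/-- Homogeneous-type symbol estimates away from the origin: `F` is a symbol of order `s` and
smoothness `N` with weight `w` if each of its derivatives of order `n ≤ N` is bounded by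
`w ξ * ‖ξ‖ ^ (s - n)` at `ξ ≠ 0`. Multiplicative constants are part of the weight. -/
structure IsWeightedSymbol (N : ℕ) (s : ℝ) (w : V → ℝ) (F : V → E) : Prop where
  contDiffOn : ContDiffOn ℝ N F {0}ᶜ
  norm_iteratedFDerivWithin_le : ∀ n ≤ N, ∀ ξ, ξ ≠ 0 →
    ‖iteratedFDerivWithin ℝ n F {0}ᶜ ξ‖ ≤ w ξ * ‖ξ‖ ^ (s - n)

namespace IsWeightedSymbol

variable {N : ℕ} {s p : ℝ} {w w' : V → ℝ} {F : V → E}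

lemma norm_le (hF : IsWeightedSymbol N s w F) {ξ : V} (hξ : ξ ≠ 0) :
    ‖F ξ‖ ≤ w ξ * ‖ξ‖ ^ s := by
  simpa using hF.norm_iteratedFDerivWithin_le 0 N.zero_le ξ hξ

lemma weight_nonneg (hF : IsWeightedSymbol N s w F) {ξ : V} (hξ : ξ ≠ 0) : 0 ≤ w ξ := by
  have hpos : 0 < ‖ξ‖ ^ s := Real.rpow_pos_of_pos (norm_pos_iff.2 hξ) s
  exact nonneg_of_mul_nonneg_left ((norm_nonneg _).trans (hF.norm_le hξ)) hpos

lemma of_mul_norm_rpow_le (hF : IsWeightedSymbol N (s + p) w F)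
    (hw : ∀ ξ, ξ ≠ 0 → w ξ * ‖ξ‖ ^ p ≤ w' ξ) : IsWeightedSymbol N s w' F where
  contDiffOn := hF.contDiffOn
  norm_iteratedFDerivWithin_le n hn ξ hξ := by
    refine (hF.norm_iteratedFDerivWithin_le n hn ξ hξ).trans ?_
    rw [show s + p - n = p + (s - n) by ring, Real.rpow_add (norm_pos_iff.2 hξ), ← mul_assoc]
    gcongr
    exact hw ξ hξ

lemma smul {s₁ s₂ : ℝ} {w₁ w₂ : V → ℝ} {f : V → ℝ} (hf : IsWeightedSymbol N s₁ w₁ f)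
    (hF : IsWeightedSymbol N s₂ w₂ F) :
    IsWeightedSymbol N (s₁ + s₂) (fun ξ => 2 ^ N * (w₁ ξ * w₂ ξ)) fun ξ => f ξ • F ξ where
  contDiffOn := hf.contDiffOn.smul hF.contDiffOn
  norm_iteratedFDerivWithin_le n hn ξ hξ := by
    have hw : 0 ≤ w₁ ξ * w₂ ξ := mul_nonneg (hf.weight_nonneg hξ) (hF.weight_nonneg hξ)
    have hterm : ∀ i ∈ Finset.range (n + 1),
        n.choose i * ‖iteratedFDerivWithin ℝ i f {0}ᶜ ξ‖ *
          ‖iteratedFDerivWithin ℝ (n - i) F {0}ᶜ ξ‖ ≤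
        n.choose i * (w₁ ξ * w₂ ξ * ‖ξ‖ ^ (s₁ + s₂ - n)) := fun i hi => by
      have hin : i ≤ n := Finset.mem_range_succ_iff.1 hi
      have hpow : ‖ξ‖ ^ (s₁ + s₂ - n) = ‖ξ‖ ^ (s₁ - i) * ‖ξ‖ ^ (s₂ - (n - i : ℕ)) := by
        rw [← Real.rpow_add (norm_pos_iff.2 hξ), Nat.cast_sub hin]
        congr 1
        ring
      rw [hpow, mul_assoc, mul_mul_mul_comm (w₁ ξ)]
      gcongr
      · exact mul_nonneg (hf.weight_nonneg hξ) (by positivity)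
      · exact hf.norm_iteratedFDerivWithin_le i (hin.trans hn) ξ hξ
      · exact hF.norm_iteratedFDerivWithin_le (n - i) ((n.sub_le i).trans hn) ξ hξ
    calc ‖iteratedFDerivWithin ℝ n (fun ξ => f ξ • F ξ) {0}ᶜ ξ‖
        ≤ ∑ i ∈ Finset.range (n + 1), n.choose i * ‖iteratedFDerivWithin ℝ i f {0}ᶜ ξ‖ *
            ‖iteratedFDerivWithin ℝ (n - i) F {0}ᶜ ξ‖ :=
          norm_iteratedFDerivWithin_smul_le hf.contDiffOn hF.contDiffOn
            isOpen_compl_singleton.uniqueDiffOn hξ (mod_cast hn)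
      _ ≤ ∑ i ∈ Finset.range (n + 1), n.choose i * (w₁ ξ * w₂ ξ * ‖ξ‖ ^ (s₁ + s₂ - n)) :=
          Finset.sum_le_sum hterm
      _ = 2 ^ n * (w₁ ξ * w₂ ξ) * ‖ξ‖ ^ (s₁ + s₂ - n) := by
          rw [← Finset.sum_mul, ← Nat.cast_sum, Nat.sum_range_choose]
          push_cast
          ring
      _ ≤ 2 ^ N * (w₁ ξ * w₂ ξ) * ‖ξ‖ ^ (s₁ + s₂ - n) := by
          gcongr
          norm_num

lemma of_continuousLinearMap (N : ℕ) (L : V →L[ℝ] E) :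
    IsWeightedSymbol N 1 (fun _ => ‖L‖) L where
  contDiffOn := L.contDiff.contDiffOn
  norm_iteratedFDerivWithin_le n _ ξ hξ := by
    rw [iteratedFDerivWithin_of_isOpen n isOpen_compl_singleton hξ]
    rcases n with _ | _ | n
    · simpa using L.le_opNorm ξ
    · rw [← norm_iteratedFDeriv_fderiv]
      simp
    · rw [← norm_iteratedFDeriv_fderiv, show fderiv ℝ L = fun _ => L from funext fun _ => L.fderiv,
        iteratedFDeriv_const_of_ne n.succ_ne_zero]
      simp only [Pi.zero_apply, norm_zero]
      positivity

lemma prod_smul {ι : Type*} (L : ι → V →L[ℝ] ℝ) (t : Finset ι)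
    (hF : IsWeightedSymbol N s w F) :
    IsWeightedSymbol N (s + t.card) (fun ξ => (2 ^ N) ^ t.card * (∏ i ∈ t, ‖L i‖) * w ξ)
      fun ξ => (∏ i ∈ t, L i ξ) • F ξ := by
  classical
  induction t using Finset.induction_on with
  | empty => simpa using hF
  | insert i t hi ih =>
    convert (of_continuousLinearMap N (L i)).smul ih using 1
    · rw [Finset.card_insert_of_notMem hi]
      push_cast
      ring
    · ext ξ
      rw [Finset.card_insert_of_notMem hi, Finset.prod_insert hi]
      ring
    · ext ξ
      rw [Finset.prod_insert hi, mul_smul]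

lemma aestronglyMeasurable [TopologicalSpace.SeparableSpace V] [MeasurableSpace V]
    [OpensMeasurableSpace V] {μ : Measure V} [NullSingletonClass μ]
    (hF : IsWeightedSymbol N s w F) :
    AEStronglyMeasurable F μ := by
  simpa only [restrict_compl_singleton] using
    hF.contDiffOn.continuousOn.aestronglyMeasurable_of_isSeparable (μ := μ)
      (measurableSet_singleton 0).compl (.of_separableSpace _)

lemma norm_iterate_fwdDiff_le {A : ℝ} (hF : IsWeightedSymbol N s (fun _ => A) F) (hs : s ≤ N)
    {ξ h : V} (hξ : ξ ≠ 0) (hh : 2 * N * ‖h‖ ≤ ‖ξ‖) :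
    ‖(fwdDiff h)^[N] F ξ‖ ≤ A * 2 ^ (N - s) * ‖h‖ ^ N * ‖ξ‖ ^ (s - N) := by
  have hξ_pos : 0 < ‖ξ‖ := norm_pos_iff.2 hξ
  have hhalf : ∀ t ∈ Icc (0 : ℝ) N, ‖ξ‖ / 2 ≤ ‖ξ + t • h‖ := fun t ht => by
    have hth : ‖t • h‖ ≤ N * ‖h‖ := by
      rw [norm_smul, Real.norm_of_nonneg ht.1]
      gcongr
      exact ht.2
    linarith [norm_le_add_norm_add ξ (t • h)]
  have hne : ∀ t ∈ Icc (0 : ℝ) N, ξ + t • h ≠ 0 := fun t ht =>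
    norm_pos_iff.1 ((half_pos hξ_pos).trans_le (hhalf t ht))
  have hA : 0 ≤ A := hF.weight_nonneg hξ
  refine (norm_iterate_fwdDiff_le_mul_norm_pow isOpen_compl_singleton hF.contDiffOn hne
    (B := A * (‖ξ‖ / 2) ^ (s - N)) fun t ht => ?_).trans_eq ?_
  · refine (hF.norm_iteratedFDerivWithin_le N le_rfl _ (hne t ht)).trans ?_
    gcongr ?_ * ?_
    exact Real.rpow_le_rpow_of_nonpos (half_pos hξ_pos) (hhalf t ht) (sub_nonpos.2 hs)
  · rw [Real.div_rpow hξ_pos.le zero_le_two, div_eq_mul_inv, ← Real.rpow_neg zero_le_two, neg_sub]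
    ring

end IsWeightedSymbol

end Symbol

section ModulusOfSmoothness

variable {V E : Type*} [NormedAddCommGroup V] [MeasurableSpace V] [BorelSpace V]
  {μ : Measure V} [μ.IsAddRightInvariant] [NormedAddCommGroup E]

lemma integrable_iterate_fwdDiff {F : V → E} (hF : Integrable F μ) (h : V) (N : ℕ) :
    Integrable ((fwdDiff h)^[N] F) μ := by
  induction N generalizing F with
  | zero => exact hF
  | succ _ ih => exact ih ((hF.comp_add_right h).sub hF)

lemma setIntegral_ball_norm_comp_add_right_le {F : V → E} (hF : Integrable F μ) (R : ℝ) (h : V) :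
    ∫ ξ in ball 0 R, ‖F (ξ + h)‖ ∂μ ≤ ∫ ξ in ball 0 (R + ‖h‖), ‖F ξ‖ ∂μ := by
  have hball : (· + h) ⁻¹' ball h R = ball (0 : V) R := by
    ext ξ
    simp
  rw [← hball, (measurePreserving_add_right μ h).setIntegral_preimage_emb
    (measurableEmbedding_addRight h) (fun ξ => ‖F ξ‖)]
  refine setIntegral_mono_set hF.norm.integrableOn
    (Filter.Eventually.of_forall fun ξ => norm_nonneg _) (ball_subset_ball' ?_).eventuallyLE
  simp

lemma setIntegral_ball_norm_iterate_fwdDiff_le {F : V → E} (hF : Integrable F μ) (R : ℝ) (h : V)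
    (N : ℕ) :
    ∫ ξ in ball 0 R, ‖(fwdDiff h)^[N] F ξ‖ ∂μ ≤
      2 ^ N * ∫ ξ in ball 0 (R + N * ‖h‖), ‖F ξ‖ ∂μ := by
  induction N generalizing F with
  | zero => simp
  | succ N ih =>
    have hshift : Integrable (fun ξ => F (ξ + h)) μ := hF.comp_add_right h
    set r := R + N * ‖h‖
    have hr : R + (N + 1 : ℕ) * ‖h‖ = r + ‖h‖ := by
      push_cast
      ring
    calc ∫ ξ in ball 0 R, ‖(fwdDiff h)^[N] (fwdDiff h F) ξ‖ ∂μ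
        ≤ 2 ^ N * ∫ ξ in ball 0 r, ‖F (ξ + h) - F ξ‖ ∂μ := ih (hshift.sub hF)
      _ ≤ 2 ^ N * ∫ ξ in ball 0 r, ‖F (ξ + h)‖ + ‖F ξ‖ ∂μ := by
          gcongr 2 ^ N * ?_
          exact setIntegral_mono (hshift.sub hF).norm.integrableOn
            (hshift.norm.add hF.norm).integrableOn fun ξ => norm_sub_le (F (ξ + h)) (F ξ)
      _ = 2 ^ N * (∫ ξ in ball 0 r, ‖F (ξ + h)‖ ∂μ + ∫ ξ in ball 0 r, ‖F ξ‖ ∂μ) := by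
          rw [integral_add hshift.norm.integrableOn hF.norm.integrableOn]
      _ ≤ 2 ^ N * (∫ ξ in ball 0 (r + ‖h‖), ‖F ξ‖ ∂μ + ∫ ξ in ball 0 (r + ‖h‖), ‖F ξ‖ ∂μ) := by
          gcongr
          · exact setIntegral_ball_norm_comp_add_right_le hF r h
          · exact Filter.Eventually.of_forall fun ξ => norm_nonneg _
          · exact hF.norm.integrableOn
          · simp
      _ = 2 ^ (N + 1) * ∫ ξ in ball 0 (R + (N + 1 : ℕ) * ‖h‖), ‖F ξ‖ ∂μ := by
          rw [hr]
          ring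

end ModulusOfSmoothness

section SymbolModulusOfSmoothness

variable {V E : Type*} [NormedAddCommGroup V] [MeasurableSpace V]

/-- The constant in the bound `‖Δ_h^N F‖_{L¹} ≤ smoothnessConst μ N σ * A * ‖h‖ ^ (d + σ)` for a
symbol `F` of order `σ` with constant weight `A`. The two summands are the contributions of
`‖ξ‖ < 2 N ‖h‖`, where only the size of `F` matters, and of its complement, where the `N`-th
derivative of `F` is used. -/
noncomputable def smoothnessConst (μ : Measure V) (N : ℕ) (σ : ℝ) : ℝ :=
  2 ^ N * ∫ ξ in ball (0 : V) (3 * N), ‖ξ‖ ^ σ ∂μ +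
    2 ^ (N - σ) * ∫ ξ in (ball (0 : V) (2 * N))ᶜ, ‖ξ‖ ^ (σ - N) ∂μ

lemma smoothnessConst_nonneg (μ : Measure V) (N : ℕ) (σ : ℝ) : 0 ≤ smoothnessConst μ N σ := by
  unfold smoothnessConst
  positivity

variable [NormedSpace ℝ V] [FiniteDimensional ℝ V] [BorelSpace V]
  {μ : Measure V} [μ.IsAddHaarMeasure] [NormedAddCommGroup E] [NormedSpace ℝ E]
  {N : ℕ} {σ A : ℝ} {F : V → E}

namespace IsWeightedSymbol

lemma setIntegral_compl_ball_norm_iterate_fwdDiff_le (hF : IsWeightedSymbol N σ (fun _ => A) F)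
    (hF_int : Integrable F μ) (hσ : -(finrank ℝ V : ℝ) < σ) (hN : finrank ℝ V + σ < N)
    {h : V} (hh : h ≠ 0) :
    ∫ ξ in (ball 0 (‖h‖ * (2 * N)))ᶜ, ‖(fwdDiff h)^[N] F ξ‖ ∂μ ≤
      A * ‖h‖ ^ (finrank ℝ V + σ) *
        (2 ^ (N - σ) * ∫ ξ in (ball (0 : V) (2 * N))ᶜ, ‖ξ‖ ^ (σ - N) ∂μ) := by
  have hh_pos : 0 < ‖h‖ := norm_pos_iff.2 hh
  have hN_pos : (0 : ℝ) < N := by linarith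
  have hr_pos : 0 < ‖h‖ * (2 * N) := by positivity
  have hσN : σ ≤ N := by linarith [(finrank ℝ V).cast_nonneg (α := ℝ)]
  have hscale : ‖h‖ ^ N * ‖h‖ ^ (finrank ℝ V + (σ - N)) = ‖h‖ ^ (finrank ℝ V + σ) := by
    rw [← Real.rpow_natCast, ← Real.rpow_add hh_pos]
    congr 1
    ring
  calc ∫ ξ in (ball 0 (‖h‖ * (2 * N)))ᶜ, ‖(fwdDiff h)^[N] F ξ‖ ∂μ
      ≤ ∫ ξ in (ball 0 (‖h‖ * (2 * N)))ᶜ, A * 2 ^ (N - σ) * ‖h‖ ^ N * ‖ξ‖ ^ (σ - N) ∂μ := by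
        refine setIntegral_mono_on (integrable_iterate_fwdDiff hF_int h N).norm.integrableOn
          ((integrableOn_compl_ball_norm_rpow (by linarith) hr_pos).const_mul _)
          measurableSet_ball.compl fun ξ hξ => ?_
        have hξ : ‖h‖ * (2 * N) ≤ ‖ξ‖ := by simpa using hξ
        exact hF.norm_iterate_fwdDiff_le hσN (norm_pos_iff.1 (hr_pos.trans_le hξ))
          (by linarith)
    _ = A * ‖h‖ ^ (finrank ℝ V + σ) *
          (2 ^ (N - σ) * ∫ ξ in (ball (0 : V) (2 * N))ᶜ, ‖ξ‖ ^ (σ - N) ∂μ) := by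
        rw [integral_const_mul, setIntegral_compl_ball_norm_rpow_mul _ _ hh_pos, ← hscale]
        ring

variable [Nontrivial V]

lemma setIntegral_ball_norm_le (hF : IsWeightedSymbol N σ (fun _ => A) F)
    (hF_int : Integrable F μ) (hσ : -(finrank ℝ V : ℝ) < σ) {r : ℝ} (hr : 0 < r) (R : ℝ) :
    ∫ ξ in ball 0 (r * R), ‖F ξ‖ ∂μ ≤
      A * r ^ (finrank ℝ V + σ) * ∫ ξ in ball (0 : V) R, ‖ξ‖ ^ σ ∂μ :=
  calc ∫ ξ in ball 0 (r * R), ‖F ξ‖ ∂μ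
      ≤ ∫ ξ in ball 0 (r * R), A * ‖ξ‖ ^ σ ∂μ := by
        refine setIntegral_mono_ae hF_int.norm.integrableOn
          ((integrableOn_ball_norm_rpow hσ _).const_mul A) ?_
        filter_upwards [Measure.ae_ne μ 0] with ξ hξ using hF.norm_le hξ
    _ = A * r ^ (finrank ℝ V + σ) * ∫ ξ in ball (0 : V) R, ‖ξ‖ ^ σ ∂μ := by
        rw [integral_const_mul, setIntegral_ball_norm_rpow_mul σ R hr, mul_assoc]

lemma integral_norm_iterate_fwdDiff_le (hF : IsWeightedSymbol N σ (fun _ => A) F)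
    (hF_int : Integrable F μ) (hσ : -(finrank ℝ V : ℝ) < σ) (hN : finrank ℝ V + σ < N)
    {h : V} (hh : h ≠ 0) :
    ∫ ξ, ‖(fwdDiff h)^[N] F ξ‖ ∂μ ≤
      smoothnessConst μ N σ * A * ‖h‖ ^ (finrank ℝ V + σ) := by
  have hh_pos : 0 < ‖h‖ := norm_pos_iff.2 hh
  have hnear : ∫ ξ in ball 0 (‖h‖ * (2 * N)), ‖(fwdDiff h)^[N] F ξ‖ ∂μ ≤
      2 ^ N * (A * ‖h‖ ^ (finrank ℝ V + σ) * ∫ ξ in ball (0 : V) (3 * N), ‖ξ‖ ^ σ ∂μ) := by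
    refine (setIntegral_ball_norm_iterate_fwdDiff_le hF_int _ h N).trans ?_
    rw [show ‖h‖ * (2 * N) + N * ‖h‖ = ‖h‖ * (3 * N) by ring]
    gcongr
    exact hF.setIntegral_ball_norm_le hF_int hσ hh_pos _
  have hfar := hF.setIntegral_compl_ball_norm_iterate_fwdDiff_le hF_int hσ hN hh
  rw [← integral_add_compl measurableSet_ball (integrable_iterate_fwdDiff hF_int h N).norm,
    smoothnessConst]
  linear_combination hnear + hfar

end IsWeightedSymbol

end SymbolModulusOfSmoothness

section FourierDecay

variable {V E : Type*} [NormedAddCommGroup V] [InnerProductSpace ℝ V] [FiniteDimensional ℝ V]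
  [MeasurableSpace V] [BorelSpace V] [NormedAddCommGroup E] [NormedSpace ℂ E] {F : V → E}

lemma fourier_fwdDiff (hF : Integrable F) (h w : V) :
    𝓕 (fwdDiff h F) w = ((𝐞 ⟪h, w⟫_ℝ : ℂ) - 1) • 𝓕 F w := by
  have hshift : ∫ ξ, 𝐞 (-⟪ξ, w⟫_ℝ) • F (ξ + h) = 𝐞 ⟪h, w⟫_ℝ • 𝓕 F w :=
    congrFun (VectorFourier.fourierIntegral_comp_add_right 𝐞 volume (innerₗ V) F h) w
  simp only [Real.fourier_eq, fwdDiff, smul_sub] at hshift ⊢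
  rw [integral_sub ((Real.fourierIntegral_convergent_iff w).2 (hF.comp_add_right h))
    ((Real.fourierIntegral_convergent_iff w).2 hF), hshift, sub_smul, one_smul, Circle.smul_def]

lemma fourier_iterate_fwdDiff (hF : Integrable F) (h w : V) (N : ℕ) :
    𝓕 ((fwdDiff h)^[N] F) w = ((𝐞 ⟪h, w⟫_ℝ : ℂ) - 1) ^ N • 𝓕 F w := by
  induction N with
  | zero => simp
  | succ N ih =>
    rw [Function.iterate_succ_apply', fourier_fwdDiff (integrable_iterate_fwdDiff hF h N), ih,
      smul_smul, pow_succ']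

lemma two_pow_mul_norm_fourier_le (hF : Integrable F) {h w : V} (hw : ⟪h, w⟫_ℝ = 1 / 2) (N : ℕ) :
    2 ^ N * ‖𝓕 F w‖ ≤ ∫ ξ, ‖(fwdDiff h)^[N] F ξ‖ := by
  have hchar : (𝐞 ⟪h, w⟫_ℝ : ℂ) - 1 = -2 := by
    rw [hw, Real.fourierChar_apply,
      show ((2 * Real.pi * (1 / 2) : ℝ) : ℂ) = Real.pi by push_cast; ring, Complex.exp_pi_mul_I]
    norm_num
  calc 2 ^ N * ‖𝓕 F w‖ = ‖𝓕 ((fwdDiff h)^[N] F) w‖ := by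
        rw [fourier_iterate_fwdDiff hF, hchar, norm_smul, norm_pow, norm_neg, Complex.norm_two]
    _ ≤ ∫ ξ, ‖(fwdDiff h)^[N] F ξ‖ :=
        VectorFourier.norm_fourierIntegral_le_integral_norm 𝐞 volume (innerₗ V) _ w

lemma IsWeightedSymbol.norm_fourier_le [Nontrivial V] {N : ℕ} {σ A : ℝ}
    (hF : IsWeightedSymbol N σ (fun _ => A) F) (hF_int : Integrable F)
    (hσ : -(finrank ℝ V : ℝ) < σ) (hN : finrank ℝ V + σ < N) {w : V} (hw : w ≠ 0) :
    ‖𝓕 F w‖ ≤ smoothnessConst (volume : Measure V) N σ * A *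
      (2 * ‖w‖) ^ (-(finrank ℝ V + σ)) := by
  set h : V := (2 * ‖w‖ ^ 2)⁻¹ • w
  have hinner : ⟪h, w⟫_ℝ = 1 / 2 := by
    rw [real_inner_smul_left, real_inner_self_eq_norm_sq]
    field_simp
  have hnorm : ‖h‖ = (2 * ‖w‖)⁻¹ := by
    rw [norm_smul, Real.norm_of_nonneg (by positivity)]
    field_simp
  have hh : h ≠ 0 := norm_pos_iff.1 (hnorm ▸ by positivity)
  calc ‖𝓕 F w‖ ≤ 2 ^ N * ‖𝓕 F w‖ :=
        le_mul_of_one_le_left (norm_nonneg _) (one_le_pow₀ one_le_two)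
    _ ≤ ∫ ξ, ‖(fwdDiff h)^[N] F ξ‖ := two_pow_mul_norm_fourier_le hF_int hinner N
    _ ≤ smoothnessConst volume N σ * A * ‖h‖ ^ (finrank ℝ V + σ) :=
        hF.integral_norm_iterate_fwdDiff_le hF_int hσ hN hh
    _ = smoothnessConst volume N σ * A * (2 * ‖w‖) ^ (-(finrank ℝ V + σ)) := by
        rw [hnorm, Real.inv_rpow (by positivity), Real.rpow_neg (by positivity)]

end FourierDecay

lemma le_two_rpow_mul_add_mul_one_add_rpow_neg {t a b y q : ℝ} (ha : 0 ≤ a) (hb : 0 ≤ b)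
    (hy : 0 ≤ y) (hq : 0 ≤ q) (hta : t ≤ a) (htb : 0 < y → t ≤ b * y ^ (-q)) :
    t ≤ 2 ^ q * (a + b) * (1 + y) ^ (-q) := by
  have hcancel : ∀ z : ℝ, 0 ≤ z → z ^ (-q) = 2 ^ q * (2 * z) ^ (-q) := fun z hz => by
    rw [Real.mul_rpow zero_le_two hz, ← mul_assoc, ← Real.rpow_add two_pos, add_neg_cancel,
      Real.rpow_zero, one_mul]
  rcases le_total y 1 with hy1 | hy1
  · calc t ≤ a := hta
      _ = 2 ^ q * a * (2 * 1) ^ (-q) := by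
          rw [mul_right_comm, ← hcancel 1 zero_le_one, Real.one_rpow, one_mul]
      _ ≤ 2 ^ q * (a + b) * (1 + y) ^ (-q) := by
          gcongr ?_ * ?_ * ?_
          · linarith
          · exact Real.rpow_le_rpow_of_nonpos (by linarith) (by linarith) (by linarith)
  · calc t ≤ b * y ^ (-q) := htb (by linarith)
      _ = 2 ^ q * b * (2 * y) ^ (-q) := by
          rw [hcancel y hy]
          ring
      _ ≤ 2 ^ q * (a + b) * (1 + y) ^ (-q) := by
          gcongr ?_ * ?_ * ?_
          · linarith
          · exact Real.rpow_le_rpow_of_nonpos (by linarith) (by linarith) (by linarith)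

section ExponentialWeight

variable {V E : Type*} [NormedAddCommGroup V] [NormedSpace ℝ V] [Nontrivial V]
  [NormedAddCommGroup E] [NormedSpace ℝ E] {N : ℕ} {s p ε lam A : ℝ} {F : V → E}

namespace IsWeightedSymbol

lemma weight_const_nonneg
    (hF : IsWeightedSymbol N s (fun ξ => A * Real.exp (-(lam ^ ε * ‖ξ‖ ^ ε))) F) : 0 ≤ A := by
  obtain ⟨ξ, hξ⟩ := exists_ne (0 : V)
  exact nonneg_of_mul_nonneg_left (hF.weight_nonneg hξ) (Real.exp_pos _)

lemma const_weight_of_exp_weight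
    (hF : IsWeightedSymbol N (s + p) (fun ξ => A * Real.exp (-(lam ^ ε * ‖ξ‖ ^ ε))) F)
    (hp : 0 ≤ p) (hε : 0 < ε) (hlam : 0 < lam) :
    IsWeightedSymbol N s (fun _ => A * lam ^ (-p) * (p / ε) ^ (p / ε)) F := by
  refine hF.of_mul_norm_rpow_le fun ξ hξ => ?_
  have hbound := rpow_mul_exp_neg_rpow_le hp hε (y := lam * ‖ξ‖) (by positivity)
  rw [Real.mul_rpow hlam.le (norm_nonneg ξ), Real.mul_rpow hlam.le (norm_nonneg ξ)] at hbound
  have hA := hF.weight_const_nonneg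
  calc A * Real.exp (-(lam ^ ε * ‖ξ‖ ^ ε)) * ‖ξ‖ ^ p
      = A * lam ^ (-p) * (lam ^ p * ‖ξ‖ ^ p * Real.exp (-(lam ^ ε * ‖ξ‖ ^ ε))) := by
        rw [Real.rpow_neg hlam.le]
        field_simp
    _ ≤ A * lam ^ (-p) * (p / ε) ^ (p / ε) := by gcongr

variable [FiniteDimensional ℝ V] [MeasurableSpace V] [BorelSpace V] {μ : Measure V}
  [μ.IsAddHaarMeasure]

lemma integrable_norm_pow_mul_norm_of_exp_weight
    (hF : IsWeightedSymbol N s (fun ξ => A * Real.exp (-(lam ^ ε * ‖ξ‖ ^ ε))) F)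
    (hs : -(finrank ℝ V : ℝ) < s) (hε : 0 < ε) (hlam : 0 < lam) (k : ℕ) :
    Integrable (fun ξ => ‖ξ‖ ^ k * ‖F ξ‖) μ := by
  have hsk : -(finrank ℝ V : ℝ) < s + k := by linarith [k.cast_nonneg (α := ℝ)]
  have hexp := (integrable_norm_rpow_mul_exp_neg_mul_rpow (μ := μ) hsk hε
    (Real.rpow_pos_of_pos hlam ε)).const_mul A
  refine hexp.mono' ((measurable_norm.pow_const k).aestronglyMeasurable.mul
    hF.aestronglyMeasurable.norm) ?_
  filter_upwards [Measure.ae_ne μ 0] with ξ hξ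
  rw [Real.norm_of_nonneg (by positivity), Real.rpow_add (norm_pos_iff.2 hξ), Real.rpow_natCast,
    neg_mul]
  calc ‖ξ‖ ^ k * ‖F ξ‖ ≤ ‖ξ‖ ^ k * (A * Real.exp (-(lam ^ ε * ‖ξ‖ ^ ε)) * ‖ξ‖ ^ s) := by
        gcongr
        exact hF.norm_le hξ
    _ = A * (‖ξ‖ ^ s * ‖ξ‖ ^ k * Real.exp (-(lam ^ ε * ‖ξ‖ ^ ε))) := by ring

lemma integrable_of_exp_weight
    (hF : IsWeightedSymbol N s (fun ξ => A * Real.exp (-(lam ^ ε * ‖ξ‖ ^ ε))) F)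
    (hs : -(finrank ℝ V : ℝ) < s) (hε : 0 < ε) (hlam : 0 < lam) : Integrable F μ :=
  (integrable_norm_iff hF.aestronglyMeasurable).1 <| by
    simpa using hF.integrable_norm_pow_mul_norm_of_exp_weight hs hε hlam 0

lemma integral_norm_le_of_exp_weight
    (hF : IsWeightedSymbol N s (fun ξ => A * Real.exp (-(lam ^ ε * ‖ξ‖ ^ ε))) F)
    (hs : -(finrank ℝ V : ℝ) < s) (hε : 0 < ε) (hlam : 0 < lam) :
    ∫ ξ, ‖F ξ‖ ∂μ ≤
      (∫ ξ : V, ‖ξ‖ ^ s * Real.exp (-‖ξ‖ ^ ε) ∂μ) * (A * lam ^ (-(finrank ℝ V : ℝ) - s)) := by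
  have hexp := (integrable_norm_rpow_mul_exp_neg_mul_rpow (μ := μ) hs hε
    (Real.rpow_pos_of_pos hlam ε)).const_mul A
  simp only [neg_mul] at hexp
  calc ∫ ξ, ‖F ξ‖ ∂μ ≤ ∫ ξ : V, A * (‖ξ‖ ^ s * Real.exp (-(lam ^ ε * ‖ξ‖ ^ ε))) ∂μ := by
        refine integral_mono_ae (hF.integrable_of_exp_weight hs hε hlam).norm hexp ?_
        filter_upwards [Measure.ae_ne μ 0] with ξ hξ
        exact (hF.norm_le hξ).trans_eq (by ring)
    _ = (∫ ξ : V, ‖ξ‖ ^ s * Real.exp (-‖ξ‖ ^ ε) ∂μ) *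
          (A * lam ^ (-(finrank ℝ V : ℝ) - s)) := by
        rw [integral_const_mul, integral_norm_rpow_mul_exp_neg_mul_rpow s ε hlam]
        ring

end IsWeightedSymbol

end ExponentialWeight

section FourierDecayExponentialWeight

variable {V E : Type*} [NormedAddCommGroup V] [InnerProductSpace ℝ V] [FiniteDimensional ℝ V]
  [MeasurableSpace V] [BorelSpace V] [NormedAddCommGroup E] [NormedSpace ℂ E]

variable (V) in
/-- The constant in the decay bound for the Fourier transform of a symbol of order `σ + p` with an
exponential weight. The first summand in the bracket controls the `L¹` norm of the symbol; the
second combines `smoothnessConst` with the bound `(p / ε) ^ (p / ε)` for `y ^ p * exp (-y ^ ε)`, and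
the power of `π` converts the frequency variable of `𝓕` into an angular one. -/
noncomputable def fourierDecayConst (N : ℕ) (σ p ε : ℝ) : ℝ :=
  2 ^ (finrank ℝ V + σ) * ((∫ ξ : V, ‖ξ‖ ^ (σ + p) * Real.exp (-‖ξ‖ ^ ε)) +
    Real.pi ^ (finrank ℝ V + σ) *
      (smoothnessConst (volume : Measure V) N σ * (p / ε) ^ (p / ε)))

lemma fourierDecayConst_nonneg (N : ℕ) (σ : ℝ) {p ε : ℝ} (hp : 0 ≤ p) (hε : 0 < ε) :
    0 ≤ fourierDecayConst V N σ p ε := by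
  have := smoothnessConst_nonneg (volume : Measure V) N σ
  unfold fourierDecayConst
  positivity

variable [Nontrivial V] {N : ℕ} {σ p ε lam A : ℝ} {F : V → E}

lemma IsWeightedSymbol.norm_fourier_le_of_exp_weight
    (hF : IsWeightedSymbol N (σ + p) (fun ξ => A * Real.exp (-(lam ^ ε * ‖ξ‖ ^ ε))) F)
    (hσ : -(finrank ℝ V : ℝ) < σ) (hN : finrank ℝ V + σ < N) (hp : 0 ≤ p) (hε : 0 < ε)
    (hlam : 0 < lam) (w : V) :
    ‖𝓕 F w‖ ≤ fourierDecayConst V N σ p ε * (A * lam ^ (-(finrank ℝ V : ℝ) - p - σ)) *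
      (1 + 2 * Real.pi * ‖w‖ / lam) ^ (-(finrank ℝ V + σ)) := by
  have hσp : -(finrank ℝ V : ℝ) < σ + p := by linarith
  have hF_int : Integrable F := hF.integrable_of_exp_weight hσp hε hlam
  have hA : 0 ≤ A := hF.weight_const_nonneg
  have hq : 0 ≤ finrank ℝ V + σ := by linarith
  set q : ℝ := finrank ℝ V + σ
  set S := smoothnessConst (volume : Measure V) N σ
  have hS : 0 ≤ S := smoothnessConst_nonneg _ N σ
  set I := ∫ ξ : V, ‖ξ‖ ^ (σ + p) * Real.exp (-‖ξ‖ ^ ε)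
  set K := (p / ε) ^ (p / ε)
  set M := A * lam ^ (-(finrank ℝ V : ℝ) - p - σ)
  set y := 2 * Real.pi * ‖w‖ / lam with hy
  have hM : M = A * (lam ^ (-p) * lam ^ (-q)) := by
    rw [← Real.rpow_add hlam, show -p + -q = -(finrank ℝ V : ℝ) - p - σ by ring]
  have hsize : ‖𝓕 F w‖ ≤ I * M := by
    refine (VectorFourier.norm_fourierIntegral_le_integral_norm 𝐞 volume (innerₗ V) F w).trans ?_
    refine (hF.integral_norm_le_of_exp_weight hσp hε hlam).trans_eq ?_
    rw [← sub_sub, sub_right_comm]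
  have hdecay : 0 < y → ‖𝓕 F w‖ ≤ Real.pi ^ q * (S * K) * M * y ^ (-q) := fun hy_pos => by
    have hw : w ≠ 0 := by
      rintro rfl
      simp [hy] at hy_pos
    have hwy : 2 * ‖w‖ = Real.pi⁻¹ * (lam * y) := by
      rw [hy]
      field_simp
    refine ((hF.const_weight_of_exp_weight hp hε hlam).norm_fourier_le hF_int hσ hN hw).trans_eq ?_
    rw [hwy, Real.mul_rpow (by positivity) (by positivity), Real.mul_rpow hlam.le hy_pos.le,
      Real.inv_rpow Real.pi_pos.le, Real.rpow_neg Real.pi_pos.le, inv_inv, hM]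
    ring
  refine (le_two_rpow_mul_add_mul_one_add_rpow_neg (by positivity) (by positivity) (by positivity)
    hq hsize hdecay).trans_eq ?_
  rw [fourierDecayConst]
  ring

end FourierDecayExponentialWeight

section FourierDeriv

variable {V E : Type*} [NormedAddCommGroup V] [InnerProductSpace ℝ V] [FiniteDimensional ℝ V]
  [Nontrivial V] [MeasurableSpace V] [BorelSpace V] [NormedAddCommGroup E] [NormedSpace ℂ E]
  {N : ℕ} {σ ε lam A : ℝ} {F : V → E}

namespace IsWeightedSymbol

lemma contDiff_fourier
    (hF : IsWeightedSymbol N σ (fun ξ => A * Real.exp (-(lam ^ ε * ‖ξ‖ ^ ε))) F)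
    (hσ : -(finrank ℝ V : ℝ) < σ) (hε : 0 < ε) (hlam : 0 < lam) : ContDiff ℝ ∞ (𝓕 F) :=
  Real.contDiff_fourier fun n _ =>
    hF.integrable_norm_pow_mul_norm_of_exp_weight hσ hε hlam n

lemma norm_iteratedFDeriv_fourier_le
    (hF : IsWeightedSymbol N σ (fun ξ => A * Real.exp (-(lam ^ ε * ‖ξ‖ ^ ε))) F)
    (hσ : -(finrank ℝ V : ℝ) < σ) (hN : finrank ℝ V + σ < N) (hε : 0 < ε) (hlam : 0 < lam)
    (k : ℕ) (w : V) :
    ‖iteratedFDeriv ℝ k (𝓕 F) w‖ ≤ (2 * Real.pi) ^ k *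
      (fourierDecayConst V N σ k ε * ((2 ^ N) ^ k * A * lam ^ (-(finrank ℝ V : ℝ) - k - σ)) *
        (1 + 2 * Real.pi * ‖w‖ / lam) ^ (-(finrank ℝ V + σ))) := by
  have hmoment (n : ℕ) : Integrable fun ξ => ‖ξ‖ ^ n * ‖F ξ‖ :=
    hF.integrable_norm_pow_mul_norm_of_exp_weight hσ hε hlam n
  have hmeas : AEStronglyMeasurable F volume := hF.aestronglyMeasurable
  have hA : 0 ≤ A := hF.weight_const_nonneg
  have hconst := fourierDecayConst_nonneg (V := V) N σ k.cast_nonneg hε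
  refine ContinuousMultilinearMap.opNorm_le_bound (by positivity) fun m => ?_
  set H : V → E := fun ξ => (∏ i, ⟪m i, ξ⟫_ℝ) • F ξ
  have hH : IsWeightedSymbol N (σ + k)
      (fun ξ => (2 ^ N) ^ k * (∏ i, ‖m i‖) * A * Real.exp (-(lam ^ ε * ‖ξ‖ ^ ε))) H := by
    simpa [mul_assoc] using hF.prod_smul (fun i => innerSL ℝ (m i)) Finset.univ
  have hderiv : iteratedFDeriv ℝ k (𝓕 F) w m = (-(2 * Real.pi * Complex.I)) ^ k • 𝓕 H w := by
    rw [Real.iteratedFDeriv_fourier (N := k) (fun n _ => hmoment n) hmeas le_rfl,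
      Real.fourier_continuousMultilinearMap_apply
        (VectorFourier.integrable_fourierPowSMulRight _ (hmoment k) hmeas)]
    have hmul : (fun ξ => VectorFourier.fourierPowSMulRight (innerSL ℝ) F ξ k m) =
        (-(2 * Real.pi * Complex.I)) ^ k • H := by
      ext ξ
      rw [VectorFourier.fourierPowSMulRight_apply, Pi.smul_apply]
      exact congrArg (fun a : ℝ => (-(2 * Real.pi * Complex.I)) ^ k • a • F ξ)
        (Finset.prod_congr rfl fun i _ => real_inner_comm (m i) ξ)
    rw [hmul]
    exact congrFun (VectorFourier.fourierIntegral_const_smul 𝐞 volume (innerₗ V) H _) w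
  calc ‖iteratedFDeriv ℝ k (𝓕 F) w m‖ = (2 * Real.pi) ^ k * ‖𝓕 H w‖ := by
        rw [hderiv, norm_smul]
        simp [abs_of_pos Real.pi_pos]
    _ ≤ (2 * Real.pi) ^ k * (fourierDecayConst V N σ k ε *
          ((2 ^ N) ^ k * (∏ i, ‖m i‖) * A * lam ^ (-(finrank ℝ V : ℝ) - k - σ)) *
            (1 + 2 * Real.pi * ‖w‖ / lam) ^ (-(finrank ℝ V + σ))) := by
        gcongr
        exact hH.norm_fourier_le_of_exp_weight hσ hN k.cast_nonneg hε hlam w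
    _ = _ := by ring

end IsWeightedSymbol

end FourierDeriv

section OscillatoryIntegral

variable {V E : Type*} [NormedAddCommGroup V] [InnerProductSpace ℝ V] [FiniteDimensional ℝ V]
  [MeasurableSpace V] [BorelSpace V] [NormedAddCommGroup E] [NormedSpace ℂ E]

lemma integral_exp_inner_smul_eq_fourier (F : V → E) :
    (fun x => ∫ ξ, Complex.exp ((⟪x, ξ⟫_ℝ : ℂ) * Complex.I) • F ξ) =
      fun x => 𝓕 F (-(2 * Real.pi)⁻¹ • x) := by
  ext x
  rw [Real.fourier_eq']
  congr! with ξ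
  rw [real_inner_smul_right, real_inner_comm]
  field_simp

namespace IsWeightedSymbol

variable [Nontrivial V] {N : ℕ} {σ ε lam A : ℝ} {F : V → E}

lemma contDiff_integral_exp_inner_smul
    (hF : IsWeightedSymbol N σ (fun ξ => A * Real.exp (-(lam ^ ε * ‖ξ‖ ^ ε))) F)
    (hσ : -(finrank ℝ V : ℝ) < σ) (hε : 0 < ε) (hlam : 0 < lam) :
    ContDiff ℝ ∞ fun x => ∫ ξ, Complex.exp ((⟪x, ξ⟫_ℝ : ℂ) * Complex.I) • F ξ := by
  rw [integral_exp_inner_smul_eq_fourier]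
  exact (hF.contDiff_fourier hσ hε hlam).comp (contDiff_const_smul _)

lemma norm_iteratedFDeriv_integral_exp_inner_smul_le
    (hF : IsWeightedSymbol N σ (fun ξ => A * Real.exp (-(lam ^ ε * ‖ξ‖ ^ ε))) F)
    (hσ : -(finrank ℝ V : ℝ) < σ) (hN : finrank ℝ V + σ < N) (hε : 0 < ε) (hlam : 0 < lam)
    (k : ℕ) (x : V) :
    ‖iteratedFDeriv ℝ k
        (fun x => ∫ ξ, Complex.exp ((⟪x, ξ⟫_ℝ : ℂ) * Complex.I) • F ξ) x‖ ≤
      (2 ^ N) ^ k * fourierDecayConst V N σ k ε * A * lam ^ (-(finrank ℝ V : ℝ) - k - σ) *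
        (1 + ‖x‖ / lam) ^ (-(finrank ℝ V + σ)) := by
  have hcont : ContDiff ℝ k (𝓕 F) := (hF.contDiff_fourier hσ hε hlam).of_le (mod_cast le_top)
  set w : V := -(2 * Real.pi)⁻¹ • x with hw
  have hnorm : 2 * Real.pi * ‖w‖ = ‖x‖ := by
    rw [hw, norm_smul, norm_neg, Real.norm_of_nonneg (by positivity)]
    field_simp
  have hbound := hF.norm_iteratedFDeriv_fourier_le hσ hN hε hlam k w
  rw [hnorm] at hbound
  rw [integral_exp_inner_smul_eq_fourier, iteratedFDeriv_comp_const_smul _ hcont, norm_smul,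
    norm_pow, norm_neg, Real.norm_of_nonneg (by positivity), inv_pow,
    inv_mul_le_iff₀ (by positivity)]
  exact hbound.trans_eq (by ring)

end IsWeightedSymbol

end OscillatoryIntegral

theorem pointwise_kernel_bound_general (V : Type*) [NormedAddCommGroup V] [InnerProductSpace ℝ V]
    [FiniteDimensional ℝ V] [Nontrivial V] [MeasurableSpace V] [BorelSpace V] (N k : ℕ) {σ ε : ℝ}
    (hσ : -(finrank ℝ V : ℝ) < σ) (hN : finrank ℝ V + σ < N) (hε : 0 < ε) :
    ∃ C : ℝ, 0 < C ∧
      ∀ (E : Type*) [NormedAddCommGroup E] [NormedSpace ℂ E] [CompleteSpace E],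
      ∀ lam A : ℝ, 0 < lam → ∀ F : V → E,
        IsWeightedSymbol N σ (fun ξ => A * Real.exp (-(lam ^ ε * ‖ξ‖ ^ ε))) F →
        ∀ G : V → E, (G = fun x => ∫ ξ, Complex.exp ((⟪x, ξ⟫_ℝ : ℂ) * Complex.I) • F ξ) →
          ContDiff ℝ ∞ G ∧
            ∀ x, ‖iteratedFDeriv ℝ k G x‖ ≤
              C * A * lam ^ (-(finrank ℝ V : ℝ) - k - σ) *
                (1 + ‖x‖ / lam) ^ (-(finrank ℝ V + σ)) := by
  have hconst := fourierDecayConst_nonneg (V := V) N σ k.cast_nonneg hε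
  refine ⟨(2 ^ N) ^ k * (fourierDecayConst V N σ k ε + 1), by positivity, ?_⟩
  intro E _ _ _ lam A hlam F hF G hG
  subst hG
  refine ⟨hF.contDiff_integral_exp_inner_smul hσ hε hlam, fun x => ?_⟩
  refine (hF.norm_iteratedFDeriv_integral_exp_inner_smul_le hσ hN hε hlam k x).trans ?_
  gcongr
  · exact hF.weight_const_nonneg
  · exact le_add_of_nonneg_right zero_le_one

lemma exists_nat_eq_add_floor_add_one {d : ℕ} {σ : ℝ} (hσ : -(d : ℝ) < σ) :
    ∃ N : ℕ, (d : ℤ) + ⌊σ⌋ + 1 = N ∧ d + σ < N := by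
  have hfloor : -(d : ℤ) ≤ ⌊σ⌋ := Int.le_floor.2 (by exact_mod_cast hσ.le)
  obtain ⟨N, hN⟩ := Int.eq_ofNat_of_zero_le (a := d + ⌊σ⌋ + 1) (by omega)
  have hN_real : (d : ℝ) + ⌊σ⌋ + 1 = N := mod_cast hN
  exact ⟨N, hN, by linarith [Int.lt_floor_add_one σ]⟩

/-- Pointwise decay bounds for `G(x) = ∫ F(ξ) e^{i x·ξ} dξ` when the
derivatives of `F` satisfy symbol-type bounds with exponential decay. -/
theorem pointwise_kernel_bound
    (d k : ℕ) (hd : 1 ≤ d) (σ ε : ℝ) (hσ : -(d : ℝ) < σ) (hε : 0 < ε) :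
    ∃ C : ℝ, 0 < C ∧
      ∀ (E : Type) [NormedAddCommGroup E] [NormedSpace ℂ E] [FiniteDimensional ℂ E],
      ∀ lam C₀ : ℝ, 0 < lam → 0 ≤ C₀ →
      ∀ F : EuclideanSpace ℝ (Fin d) → E,
        ContDiffOn ℝ (((d : ℤ) + ⌊σ⌋ + 1).toNat) F {0}ᶜ →
        (∀ n : ℕ, (n : ℤ) ≤ (d : ℤ) + ⌊σ⌋ + 1 →
          ∀ ξ : EuclideanSpace ℝ (Fin d), ξ ≠ 0 →
            ‖iteratedFDerivWithin ℝ n F {0}ᶜ ξ‖ ≤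
              C₀ * ‖ξ‖ ^ (σ - (n : ℝ)) * Real.exp (-(lam ^ ε * ‖ξ‖ ^ ε))) →
        ∀ G : EuclideanSpace ℝ (Fin d) → E,
          (G = fun x => ∫ ξ : EuclideanSpace ℝ (Fin d),
              Complex.exp ((⟪x, ξ⟫_ℝ : ℂ) * Complex.I) • F ξ) →
          ContDiff ℝ k G ∧
            ∀ x, ‖iteratedFDeriv ℝ k G x‖ ≤
              C * C₀ * lam ^ (-(d : ℝ) - (k : ℝ) - σ) *
                (1 + ‖x‖ / lam) ^ (-((d : ℝ) + σ)) := by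
  obtain ⟨N, hN, hdσN⟩ := exists_nat_eq_add_floor_add_one hσ
  have : Nonempty (Fin d) := ⟨⟨0, hd⟩⟩
  have hdim : finrank ℝ (EuclideanSpace ℝ (Fin d)) = d := finrank_euclideanSpace_fin
  obtain ⟨C, hC, hbound⟩ := pointwise_kernel_bound_general (EuclideanSpace ℝ (Fin d)) N k
    (hdim.symm ▸ hσ) (hdim.symm ▸ hdσN) hε
  rw [hdim] at hbound
  refine ⟨C, hC, fun E _ _ _ lam C₀ hlam _ F hF hF_le G hG => ?_⟩
  have := FiniteDimensional.complete ℂ E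
  rw [hN, Int.toNat_natCast] at hF
  have hsymbol : IsWeightedSymbol N σ (fun ξ => C₀ * Real.exp (-(lam ^ ε * ‖ξ‖ ^ ε))) F :=
    ⟨hF, fun n hn ξ hξ => (hF_le n (by omega) ξ hξ).trans_eq (mul_right_comm _ _ _)⟩
  obtain ⟨hcont, hle⟩ := hbound E lam C₀ hlam F hsymbol G hG
  exact ⟨hcont.of_le (mod_cast le_top), hle⟩
end

section
/- Let d ≥ 1 be an integer, let σ > 0, λ > 0, ε > 0, C₀ ≥ 0. Suppose F : ℝ^d → E (E a finite-dimensional complex normed space) is (d + ⌊σ⌋ + 1)-times continuously differentiable on ℝ^d \ {0} and satisfies ‖∇ⁿF(ξ)‖ ≤ C₀ |ξ|^{σ−n} exp(−λ^ε |ξ|^ε) for every integer 0 ≤ n ≤ d + ⌊σ⌋ + 1 and every ξ ≠ 0, and define G(x) := ∫_{ℝ^d} F(ξ) e^{i x·ξ} dξ. Then for every k ∈ ℕ, every σ′ with 0 ≤ σ′ < min{σ,1}, and every α ∈ ℝ^d, there is a constant C depending only on d, k, σ, σ′ and ε such that ∫_{ℝ^d} ‖δ_α ∇^k G(x)‖ ·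 |x|^{σ′} dx ≤ C C₀ (|α|^{σ′} / λ^{k+σ}) · min{1, |α|/λ}^{1−σ′}. -/
open MeasureTheory Set
open scoped InnerProductSpace

/-!
For `x ≠ 0` choose `h` parallel to `x` with `⟪x, h⟫ = π`. Translating the integration variable by
`h` flips the sign of the phase, so `2 ^ N * ‖G x‖` is at most the `L¹` norm of the `N`-th forward
difference of `F` with step `h`. For a symbol of order `a` with `-d < a < N - d` this norm scales
like `‖h‖ ^ (d + a)`, hence `‖G x‖ ≲ ‖x‖ ^ (-(d + a))`.

The exponential factor lets one lower the order `σ + m` of the symbol of `∇ᵐ G` to any `a ≤ σ`, at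
the cost `lam ^ (a - σ - m)`, which gives `‖∇ᵐ G x‖ ≲ lam ^ (a - σ - m) * (lam + ‖x‖) ^ (-(d + a))`.
For `a > σ'` the right-hand side is integrable against `‖x‖ ^ σ'`; the difference `δ_α` is estimated
by the triangle inequality when `‖α‖ ≥ lam` and by the mean value theorem when `‖α‖ ≤ lam`.
-/

open Module Metric

section RealPowers

theorem rpow_neg_le_rpow_mul_rpow_neg {c s t p : ℝ} (hc : 0 < c) (ht : 0 < t) (hts : t ≤ c * s)
    (hp : 0 ≤ p) : s ^ (-p) ≤ c ^ p * t ^ (-p) :=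
  calc s ^ (-p) ≤ (t / c) ^ (-p) :=
        Real.rpow_le_rpow_of_nonpos (by positivity) ((div_le_iff₀' hc).2 hts) (neg_nonpos.2 hp)
    _ = c ^ p * t ^ (-p) := by
        rw [Real.div_rpow ht.le hc.le, Real.rpow_neg hc.le, div_inv_eq_mul, mul_comm]

theorem rpow_mul_exp_neg_le {t q : ℝ} (ht : 0 ≤ t) (hq : 0 ≤ q) :
    t ^ q * Real.exp (-t) ≤ q ^ q := by
  rcases hq.eq_or_lt with rfl | hq
  · simpa using ht
  have ht_le : t ≤ q * Real.exp (t / q) := by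
    rw [← div_le_iff₀' hq]
    linarith [Real.add_one_le_exp (t / q)]
  calc t ^ q * Real.exp (-t) ≤ (q * Real.exp (t / q)) ^ q * Real.exp (-t) := by gcongr
    _ = q ^ q := by
        rw [Real.mul_rpow hq.le (Real.exp_pos _).le, ← Real.exp_mul, div_mul_cancel₀ _ hq.ne',
          mul_assoc, ← Real.exp_add, add_neg_cancel, Real.exp_zero, mul_one]

theorem rpow_mul_exp_neg_rpow_le_s1 {lam ρ ε s τ : ℝ} (hlam : 0 < lam) (hρ : 0 < ρ) (hε : 0 < ε)
    (hs : s ≤ τ) :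
    ρ ^ τ * Real.exp (-(lam ^ ε * ρ ^ ε)) ≤
      ((τ - s) / ε) ^ ((τ - s) / ε) * lam ^ (s - τ) * ρ ^ s := by
  have h_peak := rpow_mul_exp_neg_le (t := lam ^ ε * ρ ^ ε) (q := (τ - s) / ε) (by positivity)
    (div_nonneg (sub_nonneg.2 hs) hε.le)
  rw [Real.mul_rpow (by positivity) (by positivity), ← Real.rpow_mul hlam.le,
    ← Real.rpow_mul hρ.le, mul_div_cancel₀ _ hε.ne'] at h_peak
  calc ρ ^ τ * Real.exp (-(lam ^ ε * ρ ^ ε))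
      = lam ^ (τ - s) * ρ ^ (τ - s) * Real.exp (-(lam ^ ε * ρ ^ ε)) *
          (lam ^ (s - τ) * ρ ^ s) := by
        have hlam_one : lam ^ (τ - s) * lam ^ (s - τ) = 1 := by rw [← Real.rpow_add hlam]; simp
        have hρ_split : ρ ^ τ = ρ ^ (τ - s) * ρ ^ s := by rw [← Real.rpow_add hρ]; simp
        rw [hρ_split]
        linear_combination (-ρ ^ (τ - s) * ρ ^ s * Real.exp (-(lam ^ ε * ρ ^ ε))) * hlam_one
    _ ≤ ((τ - s) / ε) ^ ((τ - s) / ε) * (lam ^ (s - τ) * ρ ^ s) := by gcongr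
    _ = ((τ - s) / ε) ^ ((τ - s) / ε) * lam ^ (s - τ) * ρ ^ s := by ring

end RealPowers

section RadialIntegrals

variable {V : Type*} [NormedAddCommGroup V]

theorem add_norm_rpow_eq_mul_one_add_norm_inv_smul [NormedSpace ℝ V] {lam r : ℝ} (hlam : 0 < lam)
    (x : V) :
    (lam + ‖x‖) ^ (-r) = lam ^ (-r) * (1 + ‖lam⁻¹ • x‖) ^ (-r) := by
  rw [← Real.mul_rpow hlam.le (by positivity), norm_smul, Real.norm_of_nonneg (by positivity),
    mul_add, mul_one, mul_inv_cancel_left₀ hlam.ne']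

variable [MeasurableSpace V]

/-- The integral `∫ (1 + ‖x‖)^(-r)`, finite when `r` exceeds the dimension. -/
noncomputable def bracketIntegral (μ : Measure V) (r : ℝ) : ℝ :=
  ∫ x, (1 + ‖x‖) ^ (-r) ∂μ

/-- The moment `∫_{‖x‖ ≤ 1} ‖x‖^a` of the unit ball. -/
noncomputable def unitBallMoment (μ : Measure V) (a : ℝ) : ℝ :=
  ∫ x in closedBall 0 1, ‖x‖ ^ a ∂μ

/-- The moment `∫ ‖x‖^τ exp(-‖x‖^ε)` of a stretched exponential. -/
noncomputable def stretchedExpMoment (μ : Measure V) (τ ε : ℝ) : ℝ :=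
  ∫ x, ‖x‖ ^ τ * Real.exp (-‖x‖ ^ ε) ∂μ

theorem bracketIntegral_nonneg (μ : Measure V) (r : ℝ) : 0 ≤ bracketIntegral μ r :=
  integral_nonneg fun _ => by positivity

theorem unitBallMoment_nonneg (μ : Measure V) (a : ℝ) : 0 ≤ unitBallMoment μ a :=
  integral_nonneg fun _ => by positivity

theorem stretchedExpMoment_nonneg (μ : Measure V) (τ ε : ℝ) : 0 ≤ stretchedExpMoment μ τ ε :=
  integral_nonneg fun _ => by positivity

variable [NormedSpace ℝ V] [BorelSpace V] [FiniteDimensional ℝ V] (μ : Measure V)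
  [μ.IsAddHaarMeasure] {lam r a τ ε : ℝ}

theorem integrable_add_norm_rpow (hlam : 0 < lam) (hr : finrank ℝ V < r) :
    Integrable (fun x : V => (lam + ‖x‖) ^ (-r)) μ := by
  simp only [add_norm_rpow_eq_mul_one_add_norm_inv_smul hlam]
  exact ((integrable_one_add_norm hr).comp_smul (inv_ne_zero hlam.ne')).const_mul _

theorem integral_add_norm_rpow (hlam : 0 < lam) :
    ∫ x : V, (lam + ‖x‖) ^ (-r) ∂μ = lam ^ (finrank ℝ V - r) * bracketIntegral μ r := by
  simp only [add_norm_rpow_eq_mul_one_add_norm_inv_smul hlam]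
  rw [integral_const_mul, Measure.integral_comp_inv_smul_of_nonneg μ
    (fun x : V => (1 + ‖x‖) ^ (-r)) hlam.le, smul_eq_mul, ← mul_assoc, ← Real.rpow_natCast,
    ← Real.rpow_add hlam, neg_add_eq_sub, bracketIntegral]

theorem integral_closedBall_norm_rpow {R : ℝ} (hR : 0 < R) :
    ∫ x in closedBall (0 : V) R, ‖x‖ ^ a ∂μ = R ^ (finrank ℝ V + a) * unitBallMoment μ a := by
  have h_scale := Measure.setIntegral_comp_smul_of_pos μ (fun x : V => ‖x‖ ^ a)
    (closedBall 0 1) hR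
  simp only [norm_smul, Real.norm_of_nonneg hR.le, Real.mul_rpow hR.le (norm_nonneg _),
    integral_const_mul, smul_unitClosedBall] at h_scale
  rw [smul_eq_mul, eq_inv_mul_iff_mul_eq₀ (by positivity)] at h_scale
  rw [← h_scale, ← mul_assoc, ← Real.rpow_natCast, ← Real.rpow_add hR, unitBallMoment]

theorem integral_norm_rpow_mul_exp_neg (hlam : 0 < lam) :
    ∫ x : V, ‖x‖ ^ τ * Real.exp (-(lam ^ ε * ‖x‖ ^ ε)) ∂μ =
      lam ^ (-(finrank ℝ V + τ)) * stretchedExpMoment μ τ ε := by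
  have h_scale := Measure.integral_comp_smul_of_nonneg μ
    (fun x : V => ‖x‖ ^ τ * Real.exp (-‖x‖ ^ ε)) lam (hR := hlam.le)
  simp only [norm_smul, Real.norm_of_nonneg hlam.le, Real.mul_rpow hlam.le (norm_nonneg _),
    mul_assoc, integral_const_mul] at h_scale
  rw [smul_eq_mul, ← eq_inv_mul_iff_mul_eq₀ (by positivity)] at h_scale
  rw [h_scale, ← mul_assoc, ← Real.rpow_natCast, ← Real.rpow_neg hlam.le, ← Real.rpow_neg hlam.le,
    ← Real.rpow_add hlam, neg_add_rev, stretchedExpMoment]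

variable [Nontrivial V]

theorem integrableOn_closedBall_norm_rpow (ha : -(finrank ℝ V : ℝ) < a) (R : ℝ) :
    IntegrableOn (fun x : V => ‖x‖ ^ a) (closedBall 0 R) μ := by
  have h_local : LocallyIntegrable (fun x : V => ‖x‖ ^ a) μ :=
    locallyIntegrable_of_norm_le_rpow (C := 1) (α := -a) finrank_pos (by linarith)
      (ae_of_all _ fun x => by rw [neg_neg, one_mul, Real.norm_of_nonneg (by positivity)])
      (by fun_prop : Measurable fun x : V => ‖x‖ ^ a).aestronglyMeasurable
  exact h_local.integrableOn_isCompact (isCompact_closedBall 0 R)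

theorem integrable_norm_rpow_mul_exp_neg (hτ : -(finrank ℝ V : ℝ) < τ) (hε : 0 < ε)
    (hlam : 0 < lam) :
    Integrable (fun x : V => ‖x‖ ^ τ * Real.exp (-(lam ^ ε * ‖x‖ ^ ε))) μ := by
  rw [integrable_fun_norm_addHaar μ (f := fun y => y ^ τ * Real.exp (-(lam ^ ε * y ^ ε)))]
  have h_half_line := integrableOn_rpow_mul_exp_neg_mul_rpow (s := finrank ℝ V - 1 + τ)
    (b := lam ^ ε) (by linarith) hε (by positivity)
  refine h_half_line.congr_fun (fun y (hy : 0 < y) => ?_) measurableSet_Ioi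
  simp only [smul_eq_mul, neg_mul]
  rw [← mul_assoc, ← Real.rpow_natCast, ← Real.rpow_add hy, Nat.cast_sub finrank_pos,
    Nat.cast_one]

end RadialIntegrals

section TranslationDifference

variable {V W : Type*} [NormedAddCommGroup V] [NormedAddCommGroup W]

section Pointwise

variable {g : V → W} {lam K p q : ℝ} {α : V}

-- For `‖α‖ ≥ lam` both `x` and `x - α` stay within the factor `‖α‖ / lam` of the weight.
theorem norm_sub_comp_sub_mul_rpow_le_of_le_norm (hlam : 0 < lam) (hα : lam ≤ ‖α‖)
    (hq : 0 ≤ q) (hg : ∀ x, ‖g x‖ ≤ K * (lam + ‖x‖) ^ (-p)) (x : V) :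
    ‖g x - g (x - α)‖ * ‖x‖ ^ q ≤
      (‖α‖ / lam) ^ q * K * ((lam + ‖x‖) ^ (-(p - q)) + (lam + ‖x - α‖) ^ (-(p - q))) := by
  have h_weight : ∀ y : V, ‖x‖ ≤ ‖y‖ + ‖α‖ →
      ‖g y‖ * ‖x‖ ^ q ≤ (‖α‖ / lam) ^ q * K * (lam + ‖y‖) ^ (-(p - q)) := fun y hy => by
    have h_base : 0 < lam + ‖y‖ := by positivity
    have h_dilate : ‖x‖ ≤ ‖α‖ / lam * (lam + ‖y‖) := by
      have : ‖y‖ ≤ ‖α‖ / lam * ‖y‖ :=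
        le_mul_of_one_le_left (norm_nonneg y) ((one_le_div hlam).2 hα)
      calc ‖x‖ ≤ ‖α‖ / lam * lam + ‖α‖ / lam * ‖y‖ := by
            rw [div_mul_cancel₀ _ hlam.ne']; linarith
        _ = ‖α‖ / lam * (lam + ‖y‖) := by ring
    calc ‖g y‖ * ‖x‖ ^ q
        ≤ K * (lam + ‖y‖) ^ (-p) * (‖α‖ / lam * (lam + ‖y‖)) ^ q :=
          mul_le_mul (hg y) (by gcongr) (by positivity) ((norm_nonneg _).trans (hg y))
      _ = (‖α‖ / lam) ^ q * K * (lam + ‖y‖) ^ (-(p - q)) := by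
          rw [Real.mul_rpow (by positivity) h_base.le, show -(p - q) = -p + q by ring,
            Real.rpow_add h_base]
          ring
  have h_shift : ‖x‖ ≤ ‖x - α‖ + ‖α‖ := by simpa using norm_add_le (x - α) α
  calc ‖g x - g (x - α)‖ * ‖x‖ ^ q ≤ (‖g x‖ + ‖g (x - α)‖) * ‖x‖ ^ q := by
        gcongr
        exact norm_sub_le _ _
    _ ≤ _ := by
        rw [add_mul, mul_add]
        exact add_le_add (h_weight x (by linarith [norm_nonneg α])) (h_weight _ h_shift)

theorem norm_sub_comp_sub_mul_rpow_le_of_norm_le [NormedSpace ℝ V] [NormedSpace ℝ W]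
    (hlam : 0 < lam) (hα : ‖α‖ ≤ lam) (hp : 0 ≤ p) (hq : 0 ≤ q) (hg : Differentiable ℝ g)
    (hg' : ∀ x, ‖fderiv ℝ g x‖ ≤ K * (lam + ‖x‖) ^ (-p)) (x : V) :
    ‖g x - g (x - α)‖ * ‖x‖ ^ q ≤ 2 ^ p * K * ‖α‖ * (lam + ‖x‖) ^ (-(p - q)) := by
  have h_base : 0 < lam + ‖x‖ := by positivity
  have hK : 0 ≤ K := nonneg_of_mul_nonneg_left ((norm_nonneg _).trans (hg' x)) (by positivity)
  have h_fderiv : ∀ y ∈ closedBall x ‖α‖, ‖fderiv ℝ g y‖ ≤ K * (2 ^ p * (lam + ‖x‖) ^ (-p)) :=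
    fun y hy => by
      have hxy : ‖x‖ ≤ ‖y‖ + ‖α‖ := by
        linarith [norm_le_norm_add_norm_sub' x y, (mem_closedBall_iff_norm'.1 hy)]
      have h_decay : (lam + ‖y‖) ^ (-p) ≤ 2 ^ p * (lam + ‖x‖) ^ (-p) :=
        rpow_neg_le_rpow_mul_rpow_neg two_pos h_base (by linarith [norm_nonneg y]) hp
      exact (hg' y).trans (by gcongr)
  have h_mean : ‖g x - g (x - α)‖ ≤ K * (2 ^ p * (lam + ‖x‖) ^ (-p)) * ‖x - (x - α)‖ :=
    (convex_closedBall x ‖α‖).norm_image_sub_le_of_norm_fderiv_le (fun y _ => hg y) h_fderiv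
      (by simp) (by simp)
  rw [sub_sub_cancel] at h_mean
  calc ‖g x - g (x - α)‖ * ‖x‖ ^ q
      ≤ K * (2 ^ p * (lam + ‖x‖) ^ (-p)) * ‖α‖ * (lam + ‖x‖) ^ q := by
        gcongr
        linarith
    _ = 2 ^ p * K * ‖α‖ * (lam + ‖x‖) ^ (-(p - q)) := by
        rw [show -(p - q) = -p + q by ring, Real.rpow_add h_base]
        ring

end Pointwise

variable [NormedSpace ℝ V] [MeasurableSpace V] [BorelSpace V] [FiniteDimensional ℝ V]
  (μ : Measure V) [μ.IsAddHaarMeasure] {g : V → W} {lam K p q : ℝ}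

theorem integral_norm_sub_comp_sub_mul_rpow_le_of_le_norm {α : V} (hlam : 0 < lam)
    (hα : lam ≤ ‖α‖) (hq : 0 ≤ q) (hp : finrank ℝ V + q < p)
    (hg : ∀ x, ‖g x‖ ≤ K * (lam + ‖x‖) ^ (-p)) :
    ∫ x, ‖g x - g (x - α)‖ * ‖x‖ ^ q ∂μ ≤
      2 * bracketIntegral μ (p - q) * K * lam ^ (finrank ℝ V - p) * ‖α‖ ^ q := by
  have h_int : Integrable (fun x : V => (lam + ‖x‖) ^ (-(p - q))) μ :=
    integrable_add_norm_rpow μ hlam (by linarith)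
  have h_pow : lam ^ (finrank ℝ V - (p - q)) = lam ^ (finrank ℝ V - p) * lam ^ q := by
    rw [← Real.rpow_add hlam]
    congr 1
    ring
  calc ∫ x, ‖g x - g (x - α)‖ * ‖x‖ ^ q ∂μ
      ≤ ∫ x, (‖α‖ / lam) ^ q * K *
          ((lam + ‖x‖) ^ (-(p - q)) + (lam + ‖x - α‖) ^ (-(p - q))) ∂μ :=
        integral_mono_of_nonneg (ae_of_all _ fun x => by positivity)
          ((h_int.add (h_int.comp_sub_right α)).const_mul _)
          (ae_of_all _ (norm_sub_comp_sub_mul_rpow_le_of_le_norm hlam hα hq hg))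
    _ = (‖α‖ / lam) ^ q * K *
          (2 * (lam ^ (finrank ℝ V - (p - q)) * bracketIntegral μ (p - q))) := by
        rw [integral_const_mul, integral_add h_int (h_int.comp_sub_right α),
          integral_sub_right_eq_self (fun x : V => (lam + ‖x‖) ^ (-(p - q))),
          integral_add_norm_rpow μ hlam, two_mul]
    _ = 2 * bracketIntegral μ (p - q) * K * lam ^ (finrank ℝ V - p) * ‖α‖ ^ q := by
        rw [Real.div_rpow (norm_nonneg α) hlam.le, h_pow]
        field_simp

theorem integrable_norm_sub_comp_sub_mul_rpow (hlam : 0 < lam) (hq : 0 ≤ q)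
    (hp : finrank ℝ V + q < p) (hg : Continuous g)
    (hg_le : ∀ x, ‖g x‖ ≤ K * (lam + ‖x‖) ^ (-p)) (α : V) :
    Integrable (fun x => ‖g x - g (x - α)‖ * ‖x‖ ^ q) μ := by
  have hK : 0 ≤ K := nonneg_of_mul_nonneg_left ((norm_nonneg _).trans (hg_le 0)) (by positivity)
  have hp_nonneg : 0 ≤ p := by linarith [(finrank ℝ V).cast_nonneg (α := ℝ)]
  rcases eq_or_ne α 0 with rfl | hα
  · simp
  have h_scale : 0 < min lam ‖α‖ := lt_min hlam (norm_pos_iff.2 hα)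
  have hg_le' : ∀ x, ‖g x‖ ≤ K * (min lam ‖α‖ + ‖x‖) ^ (-p) := fun x =>
    (hg_le x).trans <| mul_le_mul_of_nonneg_left (Real.rpow_le_rpow_of_nonpos (by positivity)
      (by gcongr; exact min_le_left _ _) (neg_nonpos.2 hp_nonneg)) hK
  have h_int : Integrable (fun x : V => (min lam ‖α‖ + ‖x‖) ^ (-(p - q))) μ :=
    integrable_add_norm_rpow μ h_scale (by linarith)
  refine ((h_int.add (h_int.comp_sub_right α)).const_mul ((‖α‖ / min lam ‖α‖) ^ q * K)).mono'
    ?_ (ae_of_all _ fun x => ?_)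
  · have h_cont : Continuous fun x => ‖g x - g (x - α)‖ * ‖x‖ ^ q :=
      (hg.sub (hg.comp (continuous_sub_right α))).norm.mul
        (continuous_norm.rpow_const fun _ => Or.inr hq)
    exact h_cont.aestronglyMeasurable
  · rw [Real.norm_of_nonneg (by positivity)]
    exact norm_sub_comp_sub_mul_rpow_le_of_le_norm h_scale (min_le_right _ _) hq hg_le' x

variable [NormedSpace ℝ W]

theorem integral_norm_sub_comp_sub_mul_rpow_le_of_norm_le {α : V} (hlam : 0 < lam)
    (hα : ‖α‖ ≤ lam) (hq : 0 ≤ q) (hp : finrank ℝ V + q < p) (hg : Differentiable ℝ g)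
    (hg' : ∀ x, ‖fderiv ℝ g x‖ ≤ K * (lam + ‖x‖) ^ (-p)) :
    ∫ x, ‖g x - g (x - α)‖ * ‖x‖ ^ q ∂μ ≤
      2 ^ p * bracketIntegral μ (p - q) * K * lam ^ (finrank ℝ V + q - p) * ‖α‖ := by
  have hp_nonneg : 0 ≤ p := by linarith [(finrank ℝ V).cast_nonneg (α := ℝ)]
  calc ∫ x, ‖g x - g (x - α)‖ * ‖x‖ ^ q ∂μ
      ≤ ∫ x, 2 ^ p * K * ‖α‖ * (lam + ‖x‖) ^ (-(p - q)) ∂μ :=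
        integral_mono_of_nonneg (ae_of_all _ fun x => by positivity)
          ((integrable_add_norm_rpow μ hlam (by linarith)).const_mul _)
          (ae_of_all _ (norm_sub_comp_sub_mul_rpow_le_of_norm_le hlam hα hp_nonneg hq hg hg'))
    _ = 2 ^ p * bracketIntegral μ (p - q) * K * lam ^ (finrank ℝ V + q - p) * ‖α‖ := by
        rw [integral_const_mul, integral_add_norm_rpow μ hlam,
          show (finrank ℝ V : ℝ) - (p - q) = finrank ℝ V + q - p by ring]
        ring

theorem integral_norm_sub_comp_sub_mul_rpow_le (hlam : 0 < lam) (hq : 0 ≤ q)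
    (hp : finrank ℝ V + q < p) (hg : Differentiable ℝ g)
    (hg_le : ∀ x, ‖g x‖ ≤ K * (lam + ‖x‖) ^ (-p))
    (hg'_le : ∀ x, ‖fderiv ℝ g x‖ ≤ K / lam * (lam + ‖x‖) ^ (-p)) (α : V) :
    ∫ x, ‖g x - g (x - α)‖ * ‖x‖ ^ q ∂μ ≤
      2 * 2 ^ p * bracketIntegral μ (p - q) * K * lam ^ (finrank ℝ V - p) *
        (‖α‖ ^ q * (min 1 (‖α‖ / lam)) ^ (1 - q)) := by
  have hK : 0 ≤ K := nonneg_of_mul_nonneg_left ((norm_nonneg _).trans (hg_le 0)) (by positivity)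
  have hJ : 0 ≤ bracketIntegral μ (p - q) := bracketIntegral_nonneg μ _
  rcases eq_or_ne α 0 with rfl | hα_ne
  · simp only [sub_zero, sub_self, norm_zero, zero_mul, integral_zero]
    positivity
  have hα : 0 < ‖α‖ := norm_pos_iff.2 hα_ne
  have hp_nonneg : 0 ≤ p := by linarith [(finrank ℝ V).cast_nonneg (α := ℝ)]
  rcases le_total ‖α‖ lam with h_small | h_large
  · refine (integral_norm_sub_comp_sub_mul_rpow_le_of_norm_le μ hlam h_small hq hp hg
      hg'_le).trans ?_
    rw [min_eq_right ((div_le_one hlam).2 h_small)]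
    have h_pow : K / lam * lam ^ (finrank ℝ V + q - p) * ‖α‖ =
        K * lam ^ (finrank ℝ V - p) * (‖α‖ ^ q * (‖α‖ / lam) ^ (1 - q)) := by
      rw [show (finrank ℝ V : ℝ) + q - p = finrank ℝ V - p + q by ring, Real.rpow_add hlam,
        Real.rpow_sub (div_pos hα hlam), Real.rpow_one, Real.div_rpow hα.le hlam.le]
      field_simp
    calc _ = 2 ^ p * bracketIntegral μ (p - q) *
          (K * lam ^ (finrank ℝ V - p) * (‖α‖ ^ q * (‖α‖ / lam) ^ (1 - q))) := by
          rw [← h_pow]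
          ring
      _ ≤ 2 * (2 ^ p * bracketIntegral μ (p - q) *
          (K * lam ^ (finrank ℝ V - p) * (‖α‖ ^ q * (‖α‖ / lam) ^ (1 - q)))) :=
          le_mul_of_one_le_left (by positivity) one_le_two
      _ = _ := by ring
  · refine (integral_norm_sub_comp_sub_mul_rpow_le_of_le_norm μ hlam h_large hq hp
      hg_le).trans ?_
    rw [min_eq_left ((one_le_div hlam).2 h_large), Real.one_rpow, mul_one]
    have h_two : (1 : ℝ) ≤ 2 ^ p := Real.one_le_rpow one_le_two hp_nonneg
    calc _ ≤ 2 ^ p * (2 * bracketIntegral μ (p - q) * K * lam ^ (finrank ℝ V - p) * ‖α‖ ^ q) :=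
          le_mul_of_one_le_left (by positivity) h_two
      _ = _ := by ring

end TranslationDifference

section ForwardDifference

variable {V E : Type*} [NormedAddCommGroup V] [NormedAddCommGroup E]

section Convex

variable [NormedSpace ℝ V] [NormedSpace ℝ E]

theorem norm_iteratedFDeriv_fwdDiff_le {U : Set V} (hU : IsOpen U) (hU_convex : Convex ℝ U)
    {f : V → E} {N : ℕ} {M : ℝ} (hf : ContDiffOn ℝ (N + 1) f U)
    (hM : ∀ x ∈ U, ‖iteratedFDeriv ℝ (N + 1) f x‖ ≤ M) {x h : V} (hx : x ∈ U)
    (hxh : x + h ∈ U) : ‖iteratedFDeriv ℝ N (fwdDiff h f) x‖ ≤ M * ‖h‖ := by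
  have hf_at : ∀ y ∈ U, ContDiffAt ℝ (N + 1) f y := fun y hy => hf.contDiffAt (hU.mem_nhds hy)
  have hN_lt : (N : WithTop ℕ∞) < N + 1 := by exact_mod_cast N.lt_succ_self
  have hf_shift : ContDiffAt ℝ N (fun z => f (z + h)) x :=
    ((hf_at _ hxh).of_le hN_lt.le).comp x (contDiffAt_id.add contDiffAt_const)
  have h_eq : iteratedFDeriv ℝ N (fwdDiff h f) x =
      iteratedFDeriv ℝ N f (x + h) - iteratedFDeriv ℝ N f x := by
    rw [← iteratedFDeriv_comp_add_right]
    exact iteratedFDeriv_sub_apply hf_shift ((hf_at _ hx).of_le hN_lt.le)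
  have h_mean := hU_convex.norm_image_sub_le_of_norm_fderiv_le (f := iteratedFDeriv ℝ N f)
    (fun y hy => (hf_at y hy).differentiableAt_iteratedFDeriv hN_lt)
    (fun y hy => norm_fderiv_iteratedFDeriv.trans_le (hM y hy)) hx hxh
  rwa [add_sub_cancel_left, ← h_eq] at h_mean

theorem norm_fwdDiff_iterate_le (h : V) {N : ℕ} {U : Set V} (hU : IsOpen U)
    (hU_convex : Convex ℝ U) {f : V → E} {M : ℝ} (hf : ContDiffOn ℝ N f U)
    (hM : ∀ x ∈ U, ‖iteratedFDeriv ℝ N f x‖ ≤ M) {ξ : V} (hξ : ∀ j ≤ N, ξ + j • h ∈ U) :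
    ‖(fwdDiff h)^[N] f ξ‖ ≤ M * ‖h‖ ^ N := by
  induction N generalizing U f M with
  | zero => simpa using hM ξ (by simpa using hξ 0 le_rfl)
  | succ N ih =>
    rw [Function.iterate_succ_apply, pow_succ', ← mul_assoc]
    have hf_at : ∀ y ∈ U, ContDiffAt ℝ N f y := fun y hy =>
      (hf.contDiffAt (hU.mem_nhds hy)).of_le (by exact_mod_cast N.le_succ)
    refine ih (U := U ∩ {x | x + h ∈ U}) (hU.inter (hU.preimage (continuous_add_const h)))
      (hU_convex.inter (hU_convex.translate_preimage_left h)) (fun x hx => ?_)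
      (fun x hx => norm_iteratedFDeriv_fwdDiff_le hU hU_convex hf hM hx.1 hx.2)
      (fun j hj => ⟨hξ j (by omega), ?_⟩)
    · exact (((hf_at _ hx.2).comp x (contDiffAt_id.add contDiffAt_const)).sub
        (hf_at x hx.1)).contDiffWithinAt
    · simpa [add_smul, add_assoc] using hξ (j + 1) (by omega)

end Convex

variable [MeasurableSpace V] [BorelSpace V] {μ : Measure V} [μ.IsAddRightInvariant] {f : V → E}

theorem integrable_fwdDiff_iterate (hf : Integrable f μ) (h : V) (N : ℕ) :
    Integrable ((fwdDiff h)^[N] f) μ := by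
  induction N generalizing f with
  | zero => exact hf
  | succ _ ih => exact ih ((hf.comp_add_right h).sub hf)

theorem setIntegral_closedBall_comp_add_right (f : V → ℝ) (h : V) (r : ℝ) :
    ∫ ξ in closedBall 0 r, f (ξ + h) ∂μ = ∫ ξ in closedBall h r, f ξ ∂μ := by
  have h_ball : (· + h) ⁻¹' closedBall h r = closedBall (0 : V) r := by
    rw [preimage_add_right_closedBall, sub_self]
  rw [← h_ball]
  exact (measurePreserving_add_right μ h).setIntegral_preimage_emb
    (measurableEmbedding_addRight h) f _

theorem integral_closedBall_norm_fwdDiff_le (hf : Integrable f μ) (h : V) (r : ℝ) :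
    ∫ ξ in closedBall 0 r, ‖fwdDiff h f ξ‖ ∂μ ≤
      2 * ∫ ξ in closedBall 0 (r + ‖h‖), ‖f ξ‖ ∂μ := by
  have hf_shift : Integrable (fun ξ => f (ξ + h)) μ := hf.comp_add_right h
  have h_enlarge : ∀ c : V, ‖c‖ ≤ ‖h‖ → ∫ ξ in closedBall c r, ‖f ξ‖ ∂μ ≤
      ∫ ξ in closedBall 0 (r + ‖h‖), ‖f ξ‖ ∂μ := fun c hc =>
    setIntegral_mono_set hf.norm.integrableOn (ae_of_all _ fun _ => norm_nonneg _)
      (closedBall_subset_closedBall' (by rw [dist_zero_right]; linarith)).eventuallyLE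
  calc ∫ ξ in closedBall 0 r, ‖fwdDiff h f ξ‖ ∂μ
      ≤ ∫ ξ in closedBall 0 r, (‖f (ξ + h)‖ + ‖f ξ‖) ∂μ :=
        integral_mono (hf_shift.sub hf).norm.integrableOn
          (hf_shift.norm.add hf.norm).integrableOn fun ξ => norm_sub_le _ _
    _ = ∫ ξ in closedBall h r, ‖f ξ‖ ∂μ + ∫ ξ in closedBall 0 r, ‖f ξ‖ ∂μ := by
        rw [integral_add hf_shift.norm.integrableOn hf.norm.integrableOn,
          setIntegral_closedBall_comp_add_right fun ξ => ‖f ξ‖]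
    _ ≤ _ := by
        rw [two_mul]
        exact add_le_add (h_enlarge h le_rfl) (h_enlarge 0 (by simp))

theorem integral_closedBall_norm_fwdDiff_iterate_le (hf : Integrable f μ) (h : V) (N : ℕ)
    (r : ℝ) :
    ∫ ξ in closedBall 0 r, ‖(fwdDiff h)^[N] f ξ‖ ∂μ ≤
      2 ^ N * ∫ ξ in closedBall 0 (r + N * ‖h‖), ‖f ξ‖ ∂μ := by
  induction N generalizing r with
  | zero => simp
  | succ N ih =>
    rw [Function.iterate_succ_apply']
    calc ∫ ξ in closedBall 0 r, ‖fwdDiff h ((fwdDiff h)^[N] f) ξ‖ ∂μ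
        ≤ 2 * ∫ ξ in closedBall 0 (r + ‖h‖), ‖(fwdDiff h)^[N] f ξ‖ ∂μ :=
          integral_closedBall_norm_fwdDiff_le (integrable_fwdDiff_iterate hf h N) h r
      _ ≤ 2 * (2 ^ N * ∫ ξ in closedBall 0 (r + ‖h‖ + N * ‖h‖), ‖f ξ‖ ∂μ) := by
          gcongr
          exact ih _
      _ = 2 ^ (N + 1) * ∫ ξ in closedBall 0 (r + (N + 1 : ℕ) * ‖h‖), ‖f ξ‖ ∂μ := by
          rw [← mul_assoc, ← pow_succ', Nat.cast_succ, add_mul, one_mul, add_assoc,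
            add_comm ‖h‖]

end ForwardDifference

section Symbols

variable {V E : Type*} [NormedAddCommGroup V] [NormedSpace ℝ V] [NormedAddCommGroup E]
  [NormedSpace ℝ E]

/-- `H` is a symbol of order `τ` with weight `w`: each derivative of order `n ≤ N` costs a factor
`‖ξ‖⁻¹` away from the origin, where nothing is required. -/
structure IsSymbol (N : ℕ) (τ : ℝ) (w : V → ℝ) (H : V → E) : Prop where
  contDiffOn : ContDiffOn ℝ N H {0}ᶜ
  norm_iteratedFDerivWithin_le : ∀ n ≤ N, ∀ ξ ≠ 0,
    ‖iteratedFDerivWithin ℝ n H {0}ᶜ ξ‖ ≤ w ξ * ‖ξ‖ ^ (τ - n)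

namespace IsSymbol

variable {N : ℕ} {s τ : ℝ} {u w : V → ℝ} {H : V → E}

theorem norm_le (hH : IsSymbol N τ w H) {ξ : V} (hξ : ξ ≠ 0) : ‖H ξ‖ ≤ w ξ * ‖ξ‖ ^ τ := by
  simpa using hH.norm_iteratedFDerivWithin_le 0 N.zero_le ξ hξ

theorem weight_nonneg (hH : IsSymbol N τ w H) {ξ : V} (hξ : ξ ≠ 0) : 0 ≤ w ξ :=
  nonneg_of_mul_nonneg_left ((norm_nonneg _).trans (hH.norm_le hξ))
    (Real.rpow_pos_of_pos (norm_pos_iff.2 hξ) τ)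

theorem const_weight_nonneg [Nontrivial V] {M : ℝ} (hH : IsSymbol N τ (fun _ => M) H) : 0 ≤ M :=
  hH.weight_nonneg (exists_ne (0 : V)).choose_spec

theorem nonneg_of_stretchedExp [Nontrivial V] {A lam ε : ℝ}
    (hH : IsSymbol N τ (fun ξ => A * Real.exp (-(lam ^ ε * ‖ξ‖ ^ ε))) H) : 0 ≤ A :=
  nonneg_of_mul_nonneg_left (hH.weight_nonneg (exists_ne (0 : V)).choose_spec) (Real.exp_pos _)

theorem norm_iteratedFDeriv_le (hH : IsSymbol N τ w H) {n : ℕ} (hn : n ≤ N) {ξ : V}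
    (hξ : ξ ≠ 0) : ‖iteratedFDeriv ℝ n H ξ‖ ≤ w ξ * ‖ξ‖ ^ (τ - n) := by
  rw [← iteratedFDerivWithin_of_isOpen n isOpen_compl_singleton (mem_compl_singleton_iff.2 hξ)]
  exact hH.norm_iteratedFDerivWithin_le n hn ξ hξ

theorem mono (hH : IsSymbol N τ w H) (hle : ∀ ξ ≠ 0, w ξ * ‖ξ‖ ^ τ ≤ u ξ * ‖ξ‖ ^ s) :
    IsSymbol N s u H where
  contDiffOn := hH.contDiffOn
  norm_iteratedFDerivWithin_le n hn ξ hξ := by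
    have hξ_pos : 0 < ‖ξ‖ := norm_pos_iff.2 hξ
    calc ‖iteratedFDerivWithin ℝ n H {0}ᶜ ξ‖ ≤ w ξ * ‖ξ‖ ^ (τ - n) :=
          hH.norm_iteratedFDerivWithin_le n hn ξ hξ
      _ = w ξ * ‖ξ‖ ^ τ * ‖ξ‖ ^ (-n : ℝ) := by
          rw [mul_assoc, ← Real.rpow_add hξ_pos, sub_eq_add_neg]
      _ ≤ u ξ * ‖ξ‖ ^ s * ‖ξ‖ ^ (-n : ℝ) :=
          mul_le_mul_of_nonneg_right (hle ξ hξ) (by positivity)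
      _ = u ξ * ‖ξ‖ ^ (s - n) := by rw [mul_assoc, ← Real.rpow_add hξ_pos, sub_eq_add_neg]

theorem of_stretchedExp {A lam ε : ℝ} (hlam : 0 < lam) (hε : 0 < ε)
    (hH : IsSymbol N τ (fun ξ => A * Real.exp (-(lam ^ ε * ‖ξ‖ ^ ε))) H) (hs : s ≤ τ) :
    IsSymbol N s (fun _ => A * (((τ - s) / ε) ^ ((τ - s) / ε) * lam ^ (s - τ))) H :=
  hH.mono fun ξ hξ => by
    have hA : 0 ≤ A := nonneg_of_mul_nonneg_left (hH.weight_nonneg hξ) (Real.exp_pos _)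
    rw [mul_assoc, mul_assoc, mul_comm (Real.exp _)]
    exact mul_le_mul_of_nonneg_left (rpow_mul_exp_neg_rpow_le_s1 hlam (norm_pos_iff.2 hξ) hε hs) hA

theorem of_continuousLinearMap (N : ℕ) (l : V →L[ℝ] E) : IsSymbol N 1 (fun _ => ‖l‖) l where
  contDiffOn := l.contDiff.contDiffOn
  norm_iteratedFDerivWithin_le n _ ξ hξ := by
    rw [iteratedFDerivWithin_of_isOpen n isOpen_compl_singleton (mem_compl_singleton_iff.2 hξ)]
    match n with
    | 0 => simpa using l.le_opNorm ξ
    | 1 => simp [← norm_iteratedFDeriv_fderiv (n := 0)]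
    | n + 2 =>
      have h_const : fderiv ℝ (l : V → E) = fun _ => l := funext fun _ => l.fderiv
      rw [← norm_iteratedFDeriv_fderiv, h_const, iteratedFDeriv_const_of_ne n.succ_ne_zero,
        Pi.zero_apply, norm_zero]
      positivity

theorem smul {f : V → ℝ} (hf : IsSymbol N s u f) (hH : IsSymbol N τ w H) :
    IsSymbol N (s + τ) (fun ξ => 2 ^ N * u ξ * w ξ) (fun ξ => f ξ • H ξ) where
  contDiffOn := hf.contDiffOn.smul hH.contDiffOn
  norm_iteratedFDerivWithin_le n hn ξ hξ := by
    have hξ_pos : 0 < ‖ξ‖ := norm_pos_iff.2 hξ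
    have hu : 0 ≤ u ξ := hf.weight_nonneg hξ
    have hw : 0 ≤ w ξ := hH.weight_nonneg hξ
    have h_term : ∀ i ∈ Finset.range (n + 1),
        n.choose i * ‖iteratedFDerivWithin ℝ i f {0}ᶜ ξ‖ *
          ‖iteratedFDerivWithin ℝ (n - i) H {0}ᶜ ξ‖ ≤
        n.choose i * (u ξ * w ξ * ‖ξ‖ ^ (s + τ - n)) := fun i hi => by
      have hin : i ≤ n := Nat.lt_succ_iff.1 (Finset.mem_range.1 hi)
      have h_pow : ‖ξ‖ ^ (s + τ - n) = ‖ξ‖ ^ (s - i) * ‖ξ‖ ^ (τ - (n - i : ℕ)) := by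
        rw [← Real.rpow_add hξ_pos, Nat.cast_sub hin]
        ring_nf
      calc n.choose i * ‖iteratedFDerivWithin ℝ i f {0}ᶜ ξ‖ *
            ‖iteratedFDerivWithin ℝ (n - i) H {0}ᶜ ξ‖
          ≤ n.choose i * (u ξ * ‖ξ‖ ^ (s - i)) * (w ξ * ‖ξ‖ ^ (τ - (n - i : ℕ))) := by
            gcongr
            · exact hf.norm_iteratedFDerivWithin_le i (hin.trans hn) ξ hξ
            · exact hH.norm_iteratedFDerivWithin_le (n - i) (n.sub_le i |>.trans hn) ξ hξ
        _ = n.choose i * (u ξ * w ξ * ‖ξ‖ ^ (s + τ - n)) := by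
            rw [h_pow]
            ring
    calc ‖iteratedFDerivWithin ℝ n (fun ξ => f ξ • H ξ) {0}ᶜ ξ‖
        ≤ ∑ i ∈ Finset.range (n + 1), n.choose i * (u ξ * w ξ * ‖ξ‖ ^ (s + τ - n)) :=
          (norm_iteratedFDerivWithin_smul_le hf.contDiffOn hH.contDiffOn
            isOpen_compl_singleton.uniqueDiffOn (mem_compl_singleton_iff.2 hξ)
            (by exact_mod_cast hn)).trans (Finset.sum_le_sum h_term)
      _ = 2 ^ n * (u ξ * w ξ * ‖ξ‖ ^ (s + τ - n)) := by
          rw [← Finset.sum_mul]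
          exact_mod_cast congrArg (fun c : ℕ => c * (u ξ * w ξ * ‖ξ‖ ^ (s + τ - n)))
            (Nat.sum_range_choose n)
      _ ≤ 2 ^ N * (u ξ * w ξ * ‖ξ‖ ^ (s + τ - n)) := by
          gcongr
          exact one_le_two
      _ = 2 ^ N * u ξ * w ξ * ‖ξ‖ ^ (s + τ - n) := by ring

theorem ae_norm_le [MeasurableSpace V] {μ : Measure V} [NullSingletonClass μ]
    (hH : IsSymbol N τ w H) : ∀ᵐ ξ ∂μ, ‖H ξ‖ ≤ w ξ * ‖ξ‖ ^ τ :=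
  (Measure.ae_ne μ 0).mono fun _ => hH.norm_le

theorem aestronglyMeasurable [MeasurableSpace V] [BorelSpace V] [SecondCountableTopology V]
    {μ : Measure V} [NullSingletonClass μ] (hH : IsSymbol N τ w H) :
    AEStronglyMeasurable H μ := by
  have h_restrict := hH.contDiffOn.continuousOn.aestronglyMeasurable (μ := μ)
    (measurableSet_singleton 0).compl
  rwa [restrict_compl_singleton] at h_restrict

end IsSymbol

theorem IsSymbol.prod_inner_smul {V : Type*} [NormedAddCommGroup V] [InnerProductSpace ℝ V]
    {N : ℕ} {τ : ℝ} {w : V → ℝ} {H : V → E} (hH : IsSymbol N τ w H) {m : ℕ} (y : Fin m → V) :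
    IsSymbol N (τ + m) (fun ξ => (2 ^ N) ^ m * (∏ i, ‖y i‖) * w ξ)
      (fun ξ => (∏ i, ⟪ξ, y i⟫_ℝ) • H ξ) := by
  induction m with
  | zero => simpa using hH
  | succ m ih =>
    convert (of_continuousLinearMap N (innerSL ℝ (y 0))).smul (ih fun i => y i.succ) using 1
    · push_cast
      ring
    · ext ξ
      rw [innerSL_apply_norm, Fin.prod_univ_succ]
      ring
    · ext ξ
      rw [Fin.prod_univ_succ, mul_smul, innerSL_apply_apply, real_inner_comm]

end Symbols

section SymbolDifference

variable {V E : Type*} [NormedAddCommGroup V] [NormedSpace ℝ V] [NormedAddCommGroup E]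
  [NormedSpace ℝ E]

/-- The constant bounding the `L¹` norm of the `N`-th difference of a symbol of order `a`: its two
summands come from `‖ξ‖ ≤ 2 * N * ‖h‖` and from the complement. -/
noncomputable def fwdDiffConst [MeasurableSpace V] (μ : Measure V) (N : ℕ) (a : ℝ) : ℝ :=
  2 ^ N * (3 * N) ^ (finrank ℝ V + a) * unitBallMoment μ a +
    4 ^ (N - a) * (2 * N) ^ (finrank ℝ V - (N - a)) * bracketIntegral μ (N - a)

theorem fwdDiffConst_nonneg [MeasurableSpace V] (μ : Measure V) (N : ℕ) (a : ℝ) :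
    0 ≤ fwdDiffConst μ N a :=
  add_nonneg (mul_nonneg (by positivity) (unitBallMoment_nonneg μ a))
    (mul_nonneg (by positivity) (bracketIntegral_nonneg μ _))

namespace IsSymbol

variable {N : ℕ} {a M : ℝ} {H : V → E}

theorem norm_fwdDiff_iterate_le (hH : IsSymbol N a (fun _ => M) H) (ha : a ≤ N) {h ξ : V}
    (hξ : 2 * N * ‖h‖ < ‖ξ‖) :
    ‖(fwdDiff h)^[N] H ξ‖ ≤ M * 4 ^ (N - a) * (2 * N * ‖h‖ + ‖ξ‖) ^ (-(N - a)) * ‖h‖ ^ N := by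
  have hξ_pos : 0 < ‖ξ‖ := lt_of_le_of_lt (by positivity) hξ
  have hM : 0 ≤ M := hH.weight_nonneg (norm_pos_iff.1 hξ_pos)
  have h_half_le : ∀ η ∈ ball ξ (‖ξ‖ / 2), ‖ξ‖ / 2 ≤ ‖η‖ := fun η hη => by
    linarith [norm_le_norm_add_norm_sub' ξ η, mem_ball_iff_norm'.1 hη]
  have h_ne : ∀ η ∈ ball ξ (‖ξ‖ / 2), η ≠ 0 := fun η hη =>
    norm_pos_iff.1 ((half_pos hξ_pos).trans_le (h_half_le η hη))
  refine _root_.norm_fwdDiff_iterate_le h isOpen_ball (convex_ball ξ (‖ξ‖ / 2))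
    (hH.contDiffOn.mono h_ne) (fun η hη => ?_) fun j hj => ?_
  · refine (hH.norm_iteratedFDeriv_le le_rfl (h_ne η hη)).trans ?_
    rw [mul_assoc, ← neg_sub]
    exact mul_le_mul_of_nonneg_left (rpow_neg_le_rpow_mul_rpow_neg four_pos (by positivity)
      (by linarith [h_half_le η hη]) (sub_nonneg.2 ha)) hM
  · rw [mem_ball_iff_norm, add_sub_cancel_left]
    have h_step : ‖j • h‖ ≤ N * ‖h‖ := norm_nsmul_le.trans (by gcongr)
    linarith

variable [MeasurableSpace V] [BorelSpace V] [FiniteDimensional ℝ V] (μ : Measure V)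
  [μ.IsAddHaarMeasure] [Nontrivial V] {h : V}

theorem integral_compl_closedBall_norm_fwdDiff_iterate_le (hH : IsSymbol N a (fun _ => M) H)
    (haN : finrank ℝ V + a < N) (hN : 0 < N) (hh : h ≠ 0) :
    ∫ ξ in (closedBall 0 (2 * N * ‖h‖))ᶜ, ‖(fwdDiff h)^[N] H ξ‖ ∂μ ≤
      4 ^ (N - a) * (2 * N) ^ (finrank ℝ V - (N - a)) * bracketIntegral μ (N - a) * M *
        ‖h‖ ^ (finrank ℝ V + a) := by
  have hM : 0 ≤ M := hH.const_weight_nonneg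
  have hh_pos : 0 < ‖h‖ := norm_pos_iff.2 hh
  have hR : 0 < 2 * N * ‖h‖ := by positivity
  have ha : a ≤ N := by linarith [(finrank ℝ V).cast_nonneg (α := ℝ)]
  have h_int : Integrable (fun ξ : V =>
      M * 4 ^ (N - a) * (2 * N * ‖h‖ + ‖ξ‖) ^ (-(N - a)) * ‖h‖ ^ N) μ :=
    ((integrable_add_norm_rpow μ hR (by linarith)).const_mul _).mul_const _
  have h_pow : ‖h‖ ^ (finrank ℝ V - (N - a)) * ‖h‖ ^ N = ‖h‖ ^ (finrank ℝ V + a) := by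
    rw [← Real.rpow_natCast, ← Real.rpow_add hh_pos]
    ring_nf
  calc ∫ ξ in (closedBall 0 (2 * N * ‖h‖))ᶜ, ‖(fwdDiff h)^[N] H ξ‖ ∂μ
      ≤ ∫ ξ in (closedBall 0 (2 * N * ‖h‖))ᶜ,
          M * 4 ^ (N - a) * (2 * N * ‖h‖ + ‖ξ‖) ^ (-(N - a)) * ‖h‖ ^ N ∂μ :=
        integral_mono_of_nonneg (ae_of_all _ fun ξ => norm_nonneg _) h_int.integrableOn
          (ae_restrict_of_forall_mem measurableSet_closedBall.compl fun ξ hξ =>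
            hH.norm_fwdDiff_iterate_le ha (by simpa using hξ))
    _ ≤ ∫ ξ, M * 4 ^ (N - a) * (2 * N * ‖h‖ + ‖ξ‖) ^ (-(N - a)) * ‖h‖ ^ N ∂μ :=
        setIntegral_le_integral h_int (ae_of_all _ fun ξ => by positivity)
    _ = _ := by
        rw [integral_mul_const, integral_const_mul, integral_add_norm_rpow μ hR,
          Real.mul_rpow (by positivity) hh_pos.le, ← h_pow]
        ring

theorem integral_closedBall_norm_le (hH : IsSymbol N a (fun _ => M) H) (ha : -finrank ℝ V < a)
    {R : ℝ} (hR : 0 < R) :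
    ∫ ξ in closedBall 0 R, ‖H ξ‖ ∂μ ≤ M * (R ^ (finrank ℝ V + a) * unitBallMoment μ a) := by
  rw [← integral_closedBall_norm_rpow μ hR, ← integral_const_mul]
  exact integral_mono_of_nonneg (ae_of_all _ fun ξ => norm_nonneg _)
    ((integrableOn_closedBall_norm_rpow μ ha R).const_mul M)
    (ae_restrict_of_ae hH.ae_norm_le)

theorem integral_norm_fwdDiff_iterate_le (hH : IsSymbol N a (fun _ => M) H)
    (hH_int : Integrable H μ) (ha : -finrank ℝ V < a) (haN : finrank ℝ V + a < N) (hh : h ≠ 0) :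
    ∫ ξ, ‖(fwdDiff h)^[N] H ξ‖ ∂μ ≤ fwdDiffConst μ N a * M * ‖h‖ ^ (finrank ℝ V + a) := by
  have hN : 0 < N := by
    have : (0 : ℝ) < N := by linarith
    exact_mod_cast this
  have h_near : ∫ ξ in closedBall 0 (2 * N * ‖h‖), ‖(fwdDiff h)^[N] H ξ‖ ∂μ ≤
      2 ^ N * (3 * N) ^ (finrank ℝ V + a) * unitBallMoment μ a * M *
        ‖h‖ ^ (finrank ℝ V + a) :=
    calc _ ≤ 2 ^ N * ∫ ξ in closedBall 0 (2 * N * ‖h‖ + N * ‖h‖), ‖H ξ‖ ∂μ :=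
          integral_closedBall_norm_fwdDiff_iterate_le hH_int h N _
      _ ≤ 2 ^ N * (M * ((3 * N * ‖h‖) ^ (finrank ℝ V + a) * unitBallMoment μ a)) := by
          rw [show 2 * N * ‖h‖ + N * ‖h‖ = 3 * N * ‖h‖ by ring]
          gcongr
          exact hH.integral_closedBall_norm_le μ ha (by positivity)
      _ = _ := by
          rw [Real.mul_rpow (by positivity) (norm_nonneg h)]
          ring
  rw [← integral_add_compl measurableSet_closedBall (integrable_fwdDiff_iterate hH_int h N).norm,
    fwdDiffConst, add_mul, add_mul]
  exact add_le_add h_near (hH.integral_compl_closedBall_norm_fwdDiff_iterate_le μ haN hN hh)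

end IsSymbol

end SymbolDifference

section OscillatoryIntegral

variable {V E : Type*} [NormedAddCommGroup V] [InnerProductSpace ℝ V] [MeasurableSpace V]
  [NormedAddCommGroup E] [NormedSpace ℂ E]

/-- The inverse Fourier transform `∫ F(ξ) e^{i x·ξ} dξ`, without the factor `2π` in the phase used
by Mathlib's `FourierTransform`. -/
noncomputable def oscillatoryIntegral (μ : Measure V) (F : V → E) (x : V) : E :=
  ∫ ξ, Complex.exp ((⟪x, ξ⟫_ℝ : ℂ) * Complex.I) • F ξ ∂μ

theorem norm_oscillatoryIntegral_le_integral_norm (μ : Measure V) (f : V → E) (x : V) :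
    ‖oscillatoryIntegral μ f x‖ ≤ ∫ ξ, ‖f ξ‖ ∂μ := by
  refine (norm_integral_le_integral_norm _).trans_eq ?_
  simp only [norm_smul, Complex.norm_exp_ofReal_mul_I, one_mul]

section Translation

variable [BorelSpace V] {μ : Measure V} {f : V → E} {x h : V}

theorem integrable_exp_inner_smul (hf : Integrable f μ) (x : V) :
    Integrable (fun ξ => Complex.exp ((⟪x, ξ⟫_ℝ : ℂ) * Complex.I) • f ξ) μ :=
  hf.bdd_smul 1 (Continuous.aestronglyMeasurable (by fun_prop))
    (ae_of_all _ fun ξ => (Complex.norm_exp_ofReal_mul_I _).le)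

theorem oscillatoryIntegral_fwdDiff [μ.IsAddRightInvariant] (hf : Integrable f μ)
    (hxh : ⟪x, h⟫_ℝ = Real.pi) :
    oscillatoryIntegral μ (fwdDiff h f) x = (-2 : ℂ) • oscillatoryIntegral μ f x := by
  have h_shift : oscillatoryIntegral μ (fun ξ => f (ξ + h)) x = -oscillatoryIntegral μ f x := by
    rw [oscillatoryIntegral, oscillatoryIntegral, ← integral_add_right_eq_self
      (fun ξ => Complex.exp ((⟪x, ξ⟫_ℝ : ℂ) * Complex.I) • f ξ) h, ← integral_neg]
    refine integral_congr_ae (ae_of_all _ fun ξ => ?_)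
    simp [inner_add_right, hxh, add_mul, Complex.exp_add, Complex.exp_pi_mul_I]
  have h_sub : oscillatoryIntegral μ (fwdDiff h f) x =
      oscillatoryIntegral μ (fun ξ => f (ξ + h)) x - oscillatoryIntegral μ f x := by
    simp only [oscillatoryIntegral, fwdDiff, smul_sub]
    exact integral_sub (integrable_exp_inner_smul (hf.comp_add_right h) x)
      (integrable_exp_inner_smul hf x)
  rw [h_sub, h_shift]
  module

theorem oscillatoryIntegral_fwdDiff_iterate [μ.IsAddRightInvariant] (hf : Integrable f μ)
    (hxh : ⟪x, h⟫_ℝ = Real.pi) (N : ℕ) :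
    oscillatoryIntegral μ ((fwdDiff h)^[N] f) x = (-2 : ℂ) ^ N • oscillatoryIntegral μ f x := by
  induction N with
  | zero => simp
  | succ N ih =>
    rw [Function.iterate_succ_apply',
      oscillatoryIntegral_fwdDiff (integrable_fwdDiff_iterate hf h N) hxh, ih, smul_smul, pow_succ']

theorem norm_oscillatoryIntegral_le_integral_norm_fwdDiff_iterate [μ.IsAddRightInvariant]
    (hf : Integrable f μ) (hxh : ⟪x, h⟫_ℝ = Real.pi) (N : ℕ) :
    ‖oscillatoryIntegral μ f x‖ ≤ ∫ ξ, ‖(fwdDiff h)^[N] f ξ‖ ∂μ := by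
  calc ‖oscillatoryIntegral μ f x‖ ≤ 2 ^ N * ‖oscillatoryIntegral μ f x‖ :=
        le_mul_of_one_le_left (norm_nonneg _) (one_le_pow₀ one_le_two)
    _ = ‖oscillatoryIntegral μ ((fwdDiff h)^[N] f) x‖ := by
        simp [oscillatoryIntegral_fwdDiff_iterate hf hxh, norm_smul]
    _ ≤ ∫ ξ, ‖(fwdDiff h)^[N] f ξ‖ ∂μ := norm_oscillatoryIntegral_le_integral_norm μ _ x

end Translation

/-- The constant in the pointwise bound for the oscillatory integral of a symbol with stretched
exponential weight. -/
noncomputable def decayConst (μ : Measure V) (N : ℕ) (τ a ε : ℝ) : ℝ :=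
  2 ^ (finrank ℝ V + a) * (stretchedExpMoment μ τ ε +
    ((τ - a) / ε) ^ ((τ - a) / ε) * (Real.pi ^ (finrank ℝ V + a) * fwdDiffConst μ N a))

theorem decayConst_nonneg (μ : Measure V) (N : ℕ) {τ a ε : ℝ} (hε : 0 < ε) (haτ : a ≤ τ) :
    0 ≤ decayConst μ N τ a ε := by
  have h_moment := stretchedExpMoment_nonneg μ τ ε
  have h_diff := fwdDiffConst_nonneg μ N a
  unfold decayConst
  positivity

variable [BorelSpace V] [FiniteDimensional ℝ V] [Nontrivial V] (μ : Measure V)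
  [μ.IsAddHaarMeasure] {N : ℕ} {a τ ε lam A M : ℝ} {H : V → E}

theorem IsSymbol.norm_oscillatoryIntegral_le (hH : IsSymbol N a (fun _ => M) H)
    (hH_int : Integrable H μ) (ha : -finrank ℝ V < a) (haN : finrank ℝ V + a < N) {x : V}
    (hx : x ≠ 0) :
    ‖oscillatoryIntegral μ H x‖ ≤
      Real.pi ^ (finrank ℝ V + a) * fwdDiffConst μ N a * M * ‖x‖ ^ (-(finrank ℝ V + a)) := by
  have hx_pos : 0 < ‖x‖ := norm_pos_iff.2 hx
  set h : V := (Real.pi / ‖x‖ ^ 2) • x with h_def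
  have hxh : ⟪x, h⟫_ℝ = Real.pi := by
    rw [h_def, inner_smul_right, real_inner_self_eq_norm_sq]
    field_simp
  have hh_norm : ‖h‖ = Real.pi / ‖x‖ := by
    rw [h_def, norm_smul, Real.norm_of_nonneg (by positivity)]
    field_simp
  have hh : h ≠ 0 := norm_pos_iff.1 (hh_norm ▸ by positivity)
  calc ‖oscillatoryIntegral μ H x‖ ≤ ∫ ξ, ‖(fwdDiff h)^[N] H ξ‖ ∂μ :=
        norm_oscillatoryIntegral_le_integral_norm_fwdDiff_iterate hH_int hxh N
    _ ≤ fwdDiffConst μ N a * M * ‖h‖ ^ (finrank ℝ V + a) :=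
        hH.integral_norm_fwdDiff_iterate_le μ hH_int ha haN hh
    _ = _ := by
        rw [hh_norm, Real.div_rpow Real.pi_pos.le hx_pos.le, Real.rpow_neg hx_pos.le]
        ring

namespace IsSymbol

theorem integrable_of_stretchedExp
    (hH : IsSymbol N τ (fun ξ => A * Real.exp (-(lam ^ ε * ‖ξ‖ ^ ε))) H)
    (hlam : 0 < lam) (hε : 0 < ε) (hτ : -finrank ℝ V < τ) : Integrable H μ := by
  refine ((integrable_norm_rpow_mul_exp_neg μ hτ hε hlam).const_mul A).mono'
    hH.aestronglyMeasurable (hH.ae_norm_le.mono fun ξ hξ => hξ.trans_eq ?_)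
  ring

theorem integral_norm_le_of_stretchedExp
    (hH : IsSymbol N τ (fun ξ => A * Real.exp (-(lam ^ ε * ‖ξ‖ ^ ε))) H)
    (hlam : 0 < lam) (hε : 0 < ε) (hτ : -finrank ℝ V < τ) :
    ∫ ξ, ‖H ξ‖ ∂μ ≤ A * (lam ^ (-(finrank ℝ V + τ)) * stretchedExpMoment μ τ ε) := by
  rw [← integral_norm_rpow_mul_exp_neg μ hlam, ← integral_const_mul]
  refine integral_mono_of_nonneg (ae_of_all _ fun ξ => norm_nonneg _)
    ((integrable_norm_rpow_mul_exp_neg μ hτ hε hlam).const_mul A)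
    (hH.ae_norm_le.mono fun ξ hξ => hξ.trans_eq ?_)
  ring

theorem norm_oscillatoryIntegral_le_norm_rpow_of_stretchedExp
    (hH : IsSymbol N τ (fun ξ => A * Real.exp (-(lam ^ ε * ‖ξ‖ ^ ε))) H)
    (hlam : 0 < lam) (hε : 0 < ε) (ha : -finrank ℝ V < a) (haN : finrank ℝ V + a < N)
    (haτ : a ≤ τ) {x : V} (hx : x ≠ 0) :
    ‖oscillatoryIntegral μ H x‖ ≤
      ((τ - a) / ε) ^ ((τ - a) / ε) * (Real.pi ^ (finrank ℝ V + a) * fwdDiffConst μ N a) * A *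
        lam ^ (a - τ) * ‖x‖ ^ (-(finrank ℝ V + a)) :=
  ((hH.of_stretchedExp hlam hε haτ).norm_oscillatoryIntegral_le μ
    (hH.integrable_of_stretchedExp μ hlam hε (ha.trans_le haτ)) ha haN hx).trans_eq (by ring)

theorem norm_oscillatoryIntegral_le_lam_rpow_of_stretchedExp
    (hH : IsSymbol N τ (fun ξ => A * Real.exp (-(lam ^ ε * ‖ξ‖ ^ ε))) H)
    (hlam : 0 < lam) (hε : 0 < ε) (hτ : -finrank ℝ V < τ) (a : ℝ) (x : V) :
    ‖oscillatoryIntegral μ H x‖ ≤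
      stretchedExpMoment μ τ ε * A * lam ^ (a - τ) * lam ^ (-(finrank ℝ V + a)) :=
  calc ‖oscillatoryIntegral μ H x‖ ≤ ∫ ξ, ‖H ξ‖ ∂μ :=
        norm_oscillatoryIntegral_le_integral_norm μ H x
    _ ≤ A * (lam ^ (-(finrank ℝ V + τ)) * stretchedExpMoment μ τ ε) :=
        hH.integral_norm_le_of_stretchedExp μ hlam hε hτ
    _ = _ := by
        rw [show -(finrank ℝ V + τ) = a - τ + -(finrank ℝ V + a) by ring, Real.rpow_add hlam]
        ring

theorem norm_oscillatoryIntegral_le_of_stretchedExp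
    (hH : IsSymbol N τ (fun ξ => A * Real.exp (-(lam ^ ε * ‖ξ‖ ^ ε))) H)
    (hlam : 0 < lam) (hε : 0 < ε) (ha : -finrank ℝ V < a) (haN : finrank ℝ V + a < N)
    (haτ : a ≤ τ) (x : V) :
    ‖oscillatoryIntegral μ H x‖ ≤
      decayConst μ N τ a ε * A * lam ^ (a - τ) * (lam + ‖x‖) ^ (-(finrank ℝ V + a)) := by
  have hS : 0 ≤ stretchedExpMoment μ τ ε := stretchedExpMoment_nonneg μ τ ε
  have hD : 0 ≤ fwdDiffConst μ N a := fwdDiffConst_nonneg μ N a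
  have hA : 0 ≤ A := hH.nonneg_of_stretchedExp
  obtain ⟨ρ, hxρ, h_le⟩ : ∃ ρ, lam + ‖x‖ ≤ 2 * ρ ∧ ‖oscillatoryIntegral μ H x‖ ≤
      (stretchedExpMoment μ τ ε + ((τ - a) / ε) ^ ((τ - a) / ε) *
        (Real.pi ^ (finrank ℝ V + a) * fwdDiffConst μ N a)) * A * lam ^ (a - τ) *
          ρ ^ (-(finrank ℝ V + a)) := by
    rcases le_total ‖x‖ lam with hx | hx
    · refine ⟨lam, by linarith, (hH.norm_oscillatoryIntegral_le_lam_rpow_of_stretchedExp μ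
        hlam hε (ha.trans_le haτ) a x).trans ?_⟩
      gcongr
      exact le_add_of_nonneg_right (by positivity)
    · have hx_pos : 0 < ‖x‖ := hlam.trans_le hx
      refine ⟨‖x‖, by linarith, (hH.norm_oscillatoryIntegral_le_norm_rpow_of_stretchedExp μ
        hlam hε ha haN haτ (norm_pos_iff.1 hx_pos)).trans ?_⟩
      gcongr
      exact le_add_of_nonneg_left hS
  have h_bracket := rpow_neg_le_rpow_mul_rpow_neg (p := finrank ℝ V + a) two_pos
    (by positivity : 0 < lam + ‖x‖) hxρ (by linarith)
  calc _ ≤ _ := h_le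
    _ ≤ (stretchedExpMoment μ τ ε + ((τ - a) / ε) ^ ((τ - a) / ε) *
        (Real.pi ^ (finrank ℝ V + a) * fwdDiffConst μ N a)) * A * lam ^ (a - τ) *
          (2 ^ (finrank ℝ V + a) * (lam + ‖x‖) ^ (-(finrank ℝ V + a))) := by gcongr
    _ = _ := by
        rw [decayConst]
        ring

end IsSymbol

end OscillatoryIntegral

section Derivatives

variable {V E : Type*} [NormedAddCommGroup V] [InnerProductSpace ℝ V] [NormedAddCommGroup E]
  [NormedSpace ℂ E]

/-- The bilinear form whose `VectorFourier` phase `e^{-2πi L(ξ, x)}` is `e^{i x·ξ}`. -/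
noncomputable def phaseForm (V : Type*) [NormedAddCommGroup V] [InnerProductSpace ℝ V] :
    V →L[ℝ] V →L[ℝ] ℝ :=
  (-(2 * Real.pi)⁻¹) • innerSL ℝ

theorem phaseForm_apply (ξ x : V) : phaseForm V ξ x = -(2 * Real.pi)⁻¹ * ⟪ξ, x⟫_ℝ := rfl

variable [MeasurableSpace V]

theorem vectorFourierIntegral_phaseForm (μ : Measure V) (F : V → E) :
    VectorFourier.fourierIntegral Real.fourierChar μ (phaseForm V).toLinearMap₁₂ F =
      oscillatoryIntegral μ F := by
  ext x
  refine integral_congr_ae (ae_of_all _ fun ξ => ?_)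
  simp only [Circle.smul_def, Real.fourierChar_apply,
    ContinuousLinearMap.toLinearMap₁₂_apply_apply_apply, phaseForm_apply, real_inner_comm x]
  congr 2
  have hpi : (Real.pi : ℂ) ≠ 0 := by exact_mod_cast Real.pi_ne_zero
  push_cast
  field_simp

variable [BorelSpace V] [SecondCountableTopology V] {μ : Measure V} {F : V → E} {m : ℕ}

theorem contDiff_oscillatoryIntegral
    (hF : ∀ n ≤ m, Integrable (fun ξ => ‖ξ‖ ^ n * ‖F ξ‖) μ) :
    ContDiff ℝ m (oscillatoryIntegral μ F) := by
  rw [← vectorFourierIntegral_phaseForm]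
  exact_mod_cast VectorFourier.contDiff_fourierIntegral (phaseForm V) (N := (m : ℕ∞))
    fun n hn => hF n (by exact_mod_cast hn)

theorem iteratedFDeriv_oscillatoryIntegral_apply
    (hF_meas : AEStronglyMeasurable F μ)
    (hF : ∀ n ≤ m, Integrable (fun ξ => ‖ξ‖ ^ n * ‖F ξ‖) μ) (x : V) (y : Fin m → V) :
    iteratedFDeriv ℝ m (oscillatoryIntegral μ F) x y =
      Complex.I ^ m • oscillatoryIntegral μ (fun ξ => (∏ i, ⟪ξ, y i⟫_ℝ) • F ξ) x := by
  rw [← vectorFourierIntegral_phaseForm, VectorFourier.iteratedFDeriv_fourierIntegral (phaseForm V)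
    (N := (m : ℕ∞)) (fun n hn => hF n (by exact_mod_cast hn)) hF_meas le_rfl,
    Real.fourierIntegral_continuousMultilinearMap_apply'
      (VectorFourier.integrable_fourierPowSMulRight (phaseForm V) (hF m le_rfl) hF_meas),
    vectorFourierIntegral_phaseForm, oscillatoryIntegral, oscillatoryIntegral, ← integral_smul]
  refine integral_congr_ae (ae_of_all _ fun ξ => ?_)
  have hpi : (Real.pi : ℂ) ≠ 0 := by exact_mod_cast Real.pi_ne_zero
  have h_const : (-(2 * Real.pi * Complex.I)) ^ m *
      ((-(2 * Real.pi)⁻¹ : ℝ) ^ m : ℝ) = Complex.I ^ m := by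
    push_cast
    rw [← mul_pow]
    congr 1
    field_simp
  simp only [VectorFourier.fourierPowSMulRight_apply, phaseForm_apply, Finset.prod_mul_distrib,
    Finset.prod_const, Finset.card_univ, Fintype.card_fin]
  rw [smul_comm (Complex.I ^ m), ← h_const]
  simp only [mul_smul, Complex.coe_smul]

end Derivatives

section KernelDerivatives

/-- The constant in the pointwise bound for the `m`-th derivative of the oscillatory integral of a
symbol with stretched exponential weight; each derivative multiplies the symbol by a linear form,
at the cost of a factor `2 ^ N`. -/
noncomputable def kernelConst {V : Type*} [NormedAddCommGroup V] [InnerProductSpace ℝ V]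
    [MeasurableSpace V] (μ : Measure V) (N : ℕ) (τ a ε : ℝ) (m : ℕ) : ℝ :=
  decayConst μ N (τ + m) a ε * (2 ^ N) ^ m

theorem kernelConst_nonneg {V : Type*} [NormedAddCommGroup V] [InnerProductSpace ℝ V]
    [MeasurableSpace V] (μ : Measure V) (N : ℕ) {τ a ε : ℝ} (hε : 0 < ε) (haτ : a ≤ τ) (m : ℕ) :
    0 ≤ kernelConst μ N τ a ε m :=
  mul_nonneg (decayConst_nonneg μ N hε (haτ.trans (le_add_of_nonneg_right m.cast_nonneg)))
    (by positivity)

variable {V E : Type*} [NormedAddCommGroup V] [InnerProductSpace ℝ V] [MeasurableSpace V]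
  [BorelSpace V] [FiniteDimensional ℝ V] [Nontrivial V] [NormedAddCommGroup E] [NormedSpace ℂ E]
  (μ : Measure V) [μ.IsAddHaarMeasure] {N : ℕ} {τ a ε lam A : ℝ} {F : V → E}

namespace IsSymbol

theorem integrable_pow_mul_norm
    (hF : IsSymbol N τ (fun ξ => A * Real.exp (-(lam ^ ε * ‖ξ‖ ^ ε))) F)
    (hlam : 0 < lam) (hε : 0 < ε) (hτ : -finrank ℝ V < τ) (n : ℕ) :
    Integrable (fun ξ => ‖ξ‖ ^ n * ‖F ξ‖) μ := by
  have hτn : -(finrank ℝ V : ℝ) < τ + n := by linarith [n.cast_nonneg (α := ℝ)]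
  refine ((integrable_norm_rpow_mul_exp_neg μ hτn hε hlam).const_mul A).mono'
    ((by fun_prop : Continuous fun ξ : V => ‖ξ‖ ^ n).aestronglyMeasurable.mul
      hF.aestronglyMeasurable.norm) ?_
  filter_upwards [hF.ae_norm_le, Measure.ae_ne μ 0] with ξ hFξ hξ
  rw [Real.norm_of_nonneg (by positivity), Real.rpow_add (norm_pos_iff.2 hξ), Real.rpow_natCast]
  calc ‖ξ‖ ^ n * ‖F ξ‖ ≤ ‖ξ‖ ^ n * (A * Real.exp (-(lam ^ ε * ‖ξ‖ ^ ε)) * ‖ξ‖ ^ τ) := by gcongr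
    _ = _ := by ring

theorem norm_iteratedFDeriv_oscillatoryIntegral_le
    (hF : IsSymbol N τ (fun ξ => A * Real.exp (-(lam ^ ε * ‖ξ‖ ^ ε))) F)
    (hlam : 0 < lam) (hε : 0 < ε) (ha : -finrank ℝ V < a) (haN : finrank ℝ V + a < N)
    (haτ : a ≤ τ) (m : ℕ) (x : V) :
    ‖iteratedFDeriv ℝ m (oscillatoryIntegral μ F) x‖ ≤
      kernelConst μ N τ a ε m * A * lam ^ (a - (τ + m)) *
        (lam + ‖x‖) ^ (-(finrank ℝ V + a)) := by
  have haτm : a ≤ τ + m := haτ.trans (le_add_of_nonneg_right m.cast_nonneg)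
  have h_const : 0 ≤ kernelConst μ N τ a ε m := kernelConst_nonneg μ N hε haτ m
  have hA : 0 ≤ A := hF.nonneg_of_stretchedExp
  refine ContinuousMultilinearMap.opNorm_le_bound (by positivity) fun y => ?_
  have h_symbol : IsSymbol N (τ + m)
      (fun ξ => (2 ^ N) ^ m * (∏ i, ‖y i‖) * A * Real.exp (-(lam ^ ε * ‖ξ‖ ^ ε)))
      (fun ξ => (∏ i, ⟪ξ, y i⟫_ℝ) • F ξ) := by
    simpa only [mul_assoc] using hF.prod_inner_smul y
  rw [iteratedFDeriv_oscillatoryIntegral_apply hF.aestronglyMeasurable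
    fun n _ => hF.integrable_pow_mul_norm μ hlam hε (ha.trans_le haτ) n, norm_smul, norm_pow,
    Complex.norm_I, one_pow, one_mul]
  exact (h_symbol.norm_oscillatoryIntegral_le_of_stretchedExp μ hlam hε ha haN haτm x).trans_eq
    (by rw [kernelConst]; ring)

theorem differentiable_iteratedFDeriv_oscillatoryIntegral
    (hF : IsSymbol N τ (fun ξ => A * Real.exp (-(lam ^ ε * ‖ξ‖ ^ ε))) F)
    (hlam : 0 < lam) (hε : 0 < ε) (hτ : -finrank ℝ V < τ) (k : ℕ) :
    Differentiable ℝ (iteratedFDeriv ℝ k (oscillatoryIntegral μ F)) :=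
  (contDiff_oscillatoryIntegral (m := k + 1) fun n _ =>
    hF.integrable_pow_mul_norm μ hlam hε hτ n).differentiable_iteratedFDeriv
      (by exact_mod_cast k.lt_succ_self)

theorem norm_fderiv_iteratedFDeriv_oscillatoryIntegral_le
    (hF : IsSymbol N τ (fun ξ => A * Real.exp (-(lam ^ ε * ‖ξ‖ ^ ε))) F)
    (hlam : 0 < lam) (hε : 0 < ε) (ha : -finrank ℝ V < a) (haN : finrank ℝ V + a < N)
    (haτ : a ≤ τ) (k : ℕ) (x : V) :
    ‖fderiv ℝ (iteratedFDeriv ℝ k (oscillatoryIntegral μ F)) x‖ ≤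
      kernelConst μ N τ a ε (k + 1) * A * lam ^ (a - (τ + k)) / lam *
        (lam + ‖x‖) ^ (-(finrank ℝ V + a)) := by
  have h_pow : lam ^ (a - (τ + (k + 1 : ℕ))) = lam ^ (a - (τ + k)) / lam := by
    rw [← Real.rpow_sub_one hlam.ne']
    push_cast
    ring_nf
  rw [norm_fderiv_iteratedFDeriv, mul_div_assoc, ← h_pow]
  exact hF.norm_iteratedFDeriv_oscillatoryIntegral_le μ hlam hε ha haN haτ (k + 1) x

end IsSymbol

end KernelDerivatives

section KernelDifferences

/-- The constant in the weighted `L¹` bound for the differences of the `k`-th derivative, when the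
exponential decay is traded for the order `a` in place of `τ`. -/
noncomputable def differenceConst {V : Type*} [NormedAddCommGroup V] [InnerProductSpace ℝ V]
    [MeasurableSpace V] (μ : Measure V) (N : ℕ) (τ a q ε : ℝ) (k : ℕ) : ℝ :=
  2 * 2 ^ (finrank ℝ V + a) * bracketIntegral μ (finrank ℝ V + a - q) *
    max (kernelConst μ N τ a ε k) (kernelConst μ N τ a ε (k + 1))

theorem differenceConst_nonneg {V : Type*} [NormedAddCommGroup V] [InnerProductSpace ℝ V]
    [MeasurableSpace V] (μ : Measure V) (N : ℕ) {τ a ε : ℝ} (q : ℝ) (hε : 0 < ε) (haτ : a ≤ τ)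
    (k : ℕ) : 0 ≤ differenceConst μ N τ a q ε k :=
  mul_nonneg (mul_nonneg (by positivity) (bracketIntegral_nonneg μ _))
    ((kernelConst_nonneg μ N hε haτ k).trans (le_max_left _ _))

namespace IsSymbol

variable {V E : Type*} [NormedAddCommGroup V] [InnerProductSpace ℝ V] [MeasurableSpace V]
  [BorelSpace V] [FiniteDimensional ℝ V] [Nontrivial V] [NormedAddCommGroup E] [NormedSpace ℂ E]
  (μ : Measure V) [μ.IsAddHaarMeasure] {N : ℕ} {τ a q ε lam A : ℝ} {F : V → E}

theorem integrable_norm_sub_iteratedFDeriv_mul_rpow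
    (hF : IsSymbol N τ (fun ξ => A * Real.exp (-(lam ^ ε * ‖ξ‖ ^ ε))) F)
    (hlam : 0 < lam) (hε : 0 < ε) (hq : 0 ≤ q) (hqa : q < a) (haN : finrank ℝ V + a < N)
    (haτ : a ≤ τ) (k : ℕ) (α : V) :
    Integrable (fun x => ‖iteratedFDeriv ℝ k (oscillatoryIntegral μ F) x -
      iteratedFDeriv ℝ k (oscillatoryIntegral μ F) (x - α)‖ * ‖x‖ ^ q) μ := by
  have ha : -(finrank ℝ V : ℝ) < a := by linarith [(finrank ℝ V).cast_nonneg (α := ℝ)]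
  exact integrable_norm_sub_comp_sub_mul_rpow μ hlam hq (by gcongr)
    (hF.differentiable_iteratedFDeriv_oscillatoryIntegral μ hlam hε (ha.trans_le haτ) k).continuous
    (hF.norm_iteratedFDeriv_oscillatoryIntegral_le μ hlam hε ha haN haτ k) α

theorem integral_norm_sub_iteratedFDeriv_mul_rpow_le
    (hF : IsSymbol N τ (fun ξ => A * Real.exp (-(lam ^ ε * ‖ξ‖ ^ ε))) F)
    (hlam : 0 < lam) (hε : 0 < ε) (hq : 0 ≤ q) (hqa : q < a) (haN : finrank ℝ V + a < N)
    (haτ : a ≤ τ) (k : ℕ) (α : V) :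
    ∫ x, ‖iteratedFDeriv ℝ k (oscillatoryIntegral μ F) x -
        iteratedFDeriv ℝ k (oscillatoryIntegral μ F) (x - α)‖ * ‖x‖ ^ q ∂μ ≤
      differenceConst μ N τ a q ε k * A * (‖α‖ ^ q / lam ^ (k + τ)) *
        (min 1 (‖α‖ / lam)) ^ (1 - q) := by
  have ha : -(finrank ℝ V : ℝ) < a := by linarith [(finrank ℝ V).cast_nonneg (α := ℝ)]
  have hA : 0 ≤ A := hF.nonneg_of_stretchedExp
  set c := max (kernelConst μ N τ a ε k) (kernelConst μ N τ a ε (k + 1)) with hc_def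
  have h_le : ∀ x, ‖iteratedFDeriv ℝ k (oscillatoryIntegral μ F) x‖ ≤
      c * A * lam ^ (a - (τ + k)) * (lam + ‖x‖) ^ (-(finrank ℝ V + a)) := fun x =>
    (hF.norm_iteratedFDeriv_oscillatoryIntegral_le μ hlam hε ha haN haτ k x).trans
      (by gcongr; exact le_max_left _ _)
  have h_fderiv_le : ∀ x, ‖fderiv ℝ (iteratedFDeriv ℝ k (oscillatoryIntegral μ F)) x‖ ≤
      c * A * lam ^ (a - (τ + k)) / lam * (lam + ‖x‖) ^ (-(finrank ℝ V + a)) := fun x =>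
    (hF.norm_fderiv_iteratedFDeriv_oscillatoryIntegral_le μ hlam hε ha haN haτ k x).trans
      (by gcongr; exact le_max_right _ _)
  have h_pow : lam ^ (a - (τ + k)) * lam ^ (finrank ℝ V - (finrank ℝ V + a)) =
      (lam ^ (k + τ))⁻¹ := by
    rw [← Real.rpow_add hlam, ← Real.rpow_neg hlam.le]
    ring_nf
  refine (integral_norm_sub_comp_sub_mul_rpow_le μ hlam hq (by gcongr)
    (hF.differentiable_iteratedFDeriv_oscillatoryIntegral μ hlam hε (ha.trans_le haτ) k)
    h_le h_fderiv_le α).trans_eq ?_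
  rw [differenceConst, ← hc_def, div_eq_mul_inv (‖α‖ ^ q), ← h_pow]
  ring

end IsSymbol

end KernelDifferences

theorem finite_difference_kernel_L1_bound_general {V : Type*} [NormedAddCommGroup V]
    [InnerProductSpace ℝ V] [MeasurableSpace V] [BorelSpace V] [FiniteDimensional ℝ V]
    [Nontrivial V] (μ : Measure V) [μ.IsAddHaarMeasure] (k N : ℕ) {σ σ' ε : ℝ}
    (hσ'_nonneg : 0 ≤ σ') (hσ' : σ' < σ) (hN : finrank ℝ V + σ' < N) (hε : 0 < ε) :
    ∃ C : ℝ, 0 < C ∧ ∀ {E : Type*} [NormedAddCommGroup E] [NormedSpace ℂ E] [CompleteSpace E]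
      {lam C₀ : ℝ}, 0 < lam → ∀ {F : V → E},
      IsSymbol N σ (fun ξ => C₀ * Real.exp (-(lam ^ ε * ‖ξ‖ ^ ε))) F → ∀ α : V,
        Integrable (fun x => ‖iteratedFDeriv ℝ k (oscillatoryIntegral μ F) x -
          iteratedFDeriv ℝ k (oscillatoryIntegral μ F) (x - α)‖ * ‖x‖ ^ σ') μ ∧
        ∫ x, ‖iteratedFDeriv ℝ k (oscillatoryIntegral μ F) x -
          iteratedFDeriv ℝ k (oscillatoryIntegral μ F) (x - α)‖ * ‖x‖ ^ σ' ∂μ ≤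
        C * C₀ * (‖α‖ ^ σ' / lam ^ (k + σ)) * (min 1 (‖α‖ / lam)) ^ (1 - σ') := by
  obtain ⟨a, ha, ha_lt⟩ := exists_between (lt_min hσ' (lt_sub_iff_add_lt'.2 hN))
  have haσ : a ≤ σ := (ha_lt.trans_le (min_le_left _ _)).le
  have haN : finrank ℝ V + a < N := lt_sub_iff_add_lt'.1 (ha_lt.trans_le (min_le_right _ _))
  have hC : 0 ≤ differenceConst μ N σ a σ' ε k := differenceConst_nonneg μ N σ' hε haσ k
  refine ⟨differenceConst μ N σ a σ' ε k + 1, by positivity, fun hlam _ hF α =>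
    ⟨hF.integrable_norm_sub_iteratedFDeriv_mul_rpow μ hlam hε hσ'_nonneg ha haN haσ k α,
      (hF.integral_norm_sub_iteratedFDeriv_mul_rpow_le μ hlam hε hσ'_nonneg ha haN haσ k
        α).trans ?_⟩⟩
  have hC₀ := hF.nonneg_of_stretchedExp
  gcongr
  exact le_add_of_nonneg_right zero_le_one

theorem natCast_add_lt_toNat_add_floor_add_one (n : ℕ) (t : ℝ) :
    n + t < ((n : ℤ) + ⌊t⌋ + 1).toNat :=
  calc n + t < ((n : ℤ) + ⌊t⌋ + 1 : ℤ) := by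
        push_cast
        linarith [Int.lt_floor_add_one t]
    _ ≤ ((n : ℤ) + ⌊t⌋ + 1).toNat := by exact_mod_cast Int.self_le_toNat _

/-- Weighted `L¹` bounds for finite differences of derivatives of the
kernel `G(x) = ∫ F(ξ) e^{i x·ξ} dξ` when the derivatives of `F` satisfy symbol-type
bounds with exponential decay. -/
theorem finite_difference_kernel_L1_bound
    (d k : ℕ) (hd : 1 ≤ d) (σ σ' ε : ℝ) (hσ : 0 < σ)
    (hσ'0 : 0 ≤ σ') (hσ' : σ' < min σ 1) (hε : 0 < ε) :
    ∃ C : ℝ, 0 < C ∧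
      ∀ (E : Type) [NormedAddCommGroup E] [NormedSpace ℂ E] [FiniteDimensional ℂ E],
      ∀ lam C₀ : ℝ, 0 < lam → 0 ≤ C₀ →
      ∀ F : EuclideanSpace ℝ (Fin d) → E,
        ContDiffOn ℝ (((d : ℤ) + ⌊σ⌋ + 1).toNat) F {0}ᶜ →
        (∀ n : ℕ, (n : ℤ) ≤ (d : ℤ) + ⌊σ⌋ + 1 →
          ∀ ξ : EuclideanSpace ℝ (Fin d), ξ ≠ 0 →
            ‖iteratedFDerivWithin ℝ n F {0}ᶜ ξ‖ ≤
              C₀ * ‖ξ‖ ^ (σ - (n : ℝ)) * Real.exp (-(lam ^ ε * ‖ξ‖ ^ ε))) →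
        ∀ G : EuclideanSpace ℝ (Fin d) → E,
          (G = fun x => ∫ ξ : EuclideanSpace ℝ (Fin d),
              Complex.exp ((⟪x, ξ⟫_ℝ : ℂ) * Complex.I) • F ξ) →
          ∀ α : EuclideanSpace ℝ (Fin d),
            (∫ x : EuclideanSpace ℝ (Fin d),
                ‖iteratedFDeriv ℝ k G x - iteratedFDeriv ℝ k G (x - α)‖ * ‖x‖ ^ σ') ≤
              C * C₀ * (‖α‖ ^ σ' / lam ^ ((k : ℝ) + σ)) * (min 1 (‖α‖ / lam)) ^ (1 - σ') := by
  have : Nonempty (Fin d) := ⟨0, hd⟩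
  have hN : 0 ≤ (d : ℤ) + ⌊σ⌋ + 1 := by positivity
  have h_order : (finrank ℝ (EuclideanSpace ℝ (Fin d)) : ℝ) + σ' <
      ((d : ℤ) + ⌊σ⌋ + 1).toNat := by
    rw [finrank_euclideanSpace_fin]
    linarith [natCast_add_lt_toNat_add_floor_add_one d σ, hσ'.trans_le (min_le_left _ _)]
  obtain ⟨C, hC, h_bound⟩ := finite_difference_kernel_L1_bound_general volume k _ hσ'0
    (lt_min_iff.1 hσ').1 h_order hε
  refine ⟨C, hC, fun E _ _ _ lam C₀ hlam _ F hF_diff hF_le G hG α => ?_⟩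
  have : CompleteSpace E := FiniteDimensional.complete ℂ E
  have hF : IsSymbol ((d : ℤ) + ⌊σ⌋ + 1).toNat σ
      (fun ξ => C₀ * Real.exp (-(lam ^ ε * ‖ξ‖ ^ ε))) F :=
    ⟨hF_diff, fun n hn ξ hξ => (hF_le n (by omega) ξ hξ).trans_eq (mul_right_comm _ _ _)⟩
  subst hG
  exact (h_bound hlam hF α).2
end

section
/- Let d, N ≥ 1 be integers, s > 0, 0 < c₀ < 1 < c₁, t > 0, and set L := d + ⌊s⌋ + 2. Let A : [0,t] × (ℝ^d \ {0}) → Matrix (Fin N) (Fin N) ℝ be continuous and, for each τ, L-times continuously differentiable in ξ with the derivatives ∇_ξ^l A jointly continuous, satisfying: (i) ⟨v, A(τ,ξ)·v⟩ ≥ c₀ |ξ|^s ‖v‖² for all v ∈ ℝ^N, τ ∈ [0,t], ξ ≠ 0; (ii) ‖∇_ξ^l A(τ,ξ)‖ ≤ c₁ |ξ|^{s−l} for all integers 0 ≤ l ≤ L and all τ, ξ ≠ 0. Suppose 𝒦 : [0,t] × (ℝ^d \ {0}) → Matrix (Fin N) (Fin N) ℝ is such that 𝒦 and its ξ-derivatives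 ∇_ξ^l 𝒦 for 1 ≤ l ≤ L are jointly continuous on [0,t] × (ℝ^d \ {0}); 𝒦(0, ξ) = Id for all ξ ≠ 0; for each ξ ≠ 0 and each 0 ≤ l ≤ L, τ ↦ ∇_ξ^l 𝒦(τ,ξ) is differentiable on (0,t) and the mixed derivatives commute, i.e. ∂_τ(∇_ξ^l 𝒦)(τ,ξ) = −∇_ξ^l(𝒦(τ,·)·A(τ,·))(ξ). Then for every integer 1 ≤ l ≤ L there is a constant C, depending only on d, N, s and l, such that ‖∇_ξ^l 𝒦(τ,ξ)‖ ≤ C c₀^{−l} c₁^{l} · τ |ξ|^{s−l} e^{−(c₀/2) τ |ξ|^s} for all τ ∈ (0, t] and ξ ≠ 0. -/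
open Set

attribute [local instance] Matrix.frobeniusNormedAddCommGroup Matrix.frobeniusNormedSpace

/-!
Fix `ξ ≠ 0` and put `a = c₀ |ξ|^s / 2` and `ρ = c₁ / (c₀ |ξ|)`. By the Leibniz rule
`∂_τ ∇^l K = -(∇^l K) A - R` with `R` involving only the derivatives of `K` of order `< l`.
Coercivity makes the Frobenius norm of solutions of `∂_τ U = -U A` decay at rate `2a`, so that, when
`∇^l K` vanishes at `τ = 0`, a bound `‖R‖ ≤ M (1 + a τ) e^{-aτ}` yields `‖∇^l K‖ ≤ M τ e^{-aτ}`.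
As `‖∇^k A‖ ≤ 2 a ρ^k`, the bound `‖∇^l K‖ ≤ ‖K(0)‖ l! (3ρ)^l (1 + a τ) e^{-aτ}` reproduces itself
by induction on `l`; the base `3` is chosen so that `2 ∑_{j<l} (l choose j) j! 3^j ≤ l! 3^l`.
-/

open scoped InnerProductSpace Nat

lemma two_mul_sum_choose_mul_factorial_mul_three_pow_le (n : ℕ) :
    2 * ∑ j ∈ Finset.range n, n.choose j * (j ! * 3 ^ j) ≤ n ! * 3 ^ n := by
  have choose_mul_factorial_le : ∀ j ∈ Finset.range n, n.choose j * j ! ≤ n ! := fun j hj => by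
    rw [← Nat.choose_mul_factorial_mul_factorial (Finset.mem_range.1 hj).le]
    exact Nat.le_mul_of_pos_right _ (Nat.factorial_pos _)
  have two_mul_geom_sum_le : 2 * ∑ j ∈ Finset.range n, 3 ^ j ≤ 3 ^ n := by
    have := geom_sum_mul_add 2 n
    lia
  calc 2 * ∑ j ∈ Finset.range n, n.choose j * (j ! * 3 ^ j)
      ≤ 2 * ∑ j ∈ Finset.range n, n ! * 3 ^ j := by
        simp only [← mul_assoc]
        gcongr with j hj
        exact choose_mul_factorial_le j hj
    _ = n ! * (2 * ∑ j ∈ Finset.range n, 3 ^ j) := by rw [← Finset.mul_sum]; ring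
    _ ≤ n ! * 3 ^ n := by gcongr

lemma sum_choose_mul_le_of_le_factorial_mul_pow {β γ ρ : ℝ} (hβ : 0 ≤ β) (hγ : 0 ≤ γ)
    (hρ : 0 ≤ ρ) {l : ℕ} {f g : ℕ → ℝ} (hf : ∀ j < l, f j ≤ β * j ! * (3 * ρ) ^ j)
    (hg_nonneg : ∀ k, 0 ≤ g k) (hg : ∀ k, 1 ≤ k → k ≤ l → g k ≤ γ * ρ ^ k) :
    ∑ j ∈ Finset.range l, (l.choose j : ℝ) * f j * g (l - j) ≤
      β * (γ / 2) * l ! * (3 * ρ) ^ l := by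
  have hconst : 2 * ∑ j ∈ Finset.range l, (l.choose j : ℝ) * (j ! * 3 ^ j) ≤ l ! * 3 ^ l := by
    exact_mod_cast two_mul_sum_choose_mul_factorial_mul_three_pow_le l
  calc ∑ j ∈ Finset.range l, (l.choose j : ℝ) * f j * g (l - j)
      ≤ ∑ j ∈ Finset.range l,
          (l.choose j : ℝ) * (β * j ! * (3 * ρ) ^ j) * (γ * ρ ^ (l - j)) := by
        refine Finset.sum_le_sum fun j hj => ?_
        have hj' := Finset.mem_range.1 hj
        have hfj := hf j hj'
        have hgj := hg (l - j) (by lia) (Nat.sub_le l j)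
        have hgj_nonneg := hg_nonneg (l - j)
        gcongr
    _ = β * ρ ^ l * (γ / 2) * (2 * ∑ j ∈ Finset.range l, (l.choose j : ℝ) * (j ! * 3 ^ j)) := by
        simp only [Finset.mul_sum]
        refine Finset.sum_congr rfl fun j hj => ?_
        rw [← pow_mul_pow_sub ρ (Finset.mem_range.1 hj).le]
        ring
    _ ≤ β * ρ ^ l * (γ / 2) * (l ! * 3 ^ l) := by gcongr
    _ = β * (γ / 2) * l ! * (3 * ρ) ^ l := by ring

section Energy

variable {H : Type*} [NormedAddCommGroup H] [InnerProductSpace ℝ H] {u u' : ℝ → H}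

lemma norm_sub_norm_le_of_inner_deriv_le {h h' : ℝ → ℝ} {a b : ℝ} (hab : a ≤ b)
    (hu : ContinuousOn u (Icc a b)) (hu' : ∀ τ ∈ Ioo a b, HasDerivAt u (u' τ) τ)
    (hh : ContinuousOn h (Icc a b)) (hh' : ∀ τ ∈ Ioo a b, HasDerivAt h (h' τ) τ)
    (hh'_nonneg : ∀ τ ∈ Ioo a b, 0 ≤ h' τ)
    (hle : ∀ τ ∈ Ioo a b, ⟪u τ, u' τ⟫_ℝ ≤ h' τ * ‖u τ‖) :
    ‖u b‖ - ‖u a‖ ≤ h b - h a := by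
  refine le_of_forall_pos_le_add fun ε hε => ?_
  -- The norm need not be differentiable where `u` vanishes, so it is smoothed first.
  have hpos (τ : ℝ) : 0 < ‖u τ‖ ^ 2 + ε ^ 2 := by positivity
  have norm_le_smoothed (τ : ℝ) : ‖u τ‖ ≤ √(‖u τ‖ ^ 2 + ε ^ 2) :=
    Real.le_sqrt_of_sq_le (by nlinarith)
  have smoothed_le : √(‖u a‖ ^ 2 + ε ^ 2) ≤ ‖u a‖ + ε :=
    Real.sqrt_le_iff.2 ⟨by positivity, by nlinarith [norm_nonneg (u a)]⟩
  have hderiv : ∀ τ ∈ Ioo a b, HasDerivAt (fun τ => √(‖u τ‖ ^ 2 + ε ^ 2) - h τ)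
      (2 * ⟪u τ, u' τ⟫_ℝ / (2 * √(‖u τ‖ ^ 2 + ε ^ 2)) - h' τ) τ := fun τ hτ =>
    (((hu' τ hτ).norm_sq.add_const _).sqrt (hpos τ).ne').sub (hh' τ hτ)
  have hanti : AntitoneOn (fun τ => √(‖u τ‖ ^ 2 + ε ^ 2) - h τ) (Icc a b) := by
    refine antitoneOn_of_hasDerivWithinAt_nonpos (convex_Icc a b) (by fun_prop)
      (fun τ hτ => (hderiv τ (by rwa [interior_Icc] at hτ)).hasDerivWithinAt) fun τ hτ => ?_
    rw [interior_Icc] at hτ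
    rw [sub_nonpos, mul_div_mul_left _ _ two_ne_zero, div_le_iff₀ (Real.sqrt_pos.2 (hpos τ))]
    exact (hle τ hτ).trans (mul_le_mul_of_nonneg_left (norm_le_smoothed τ) (hh'_nonneg τ hτ))
  have := hanti (left_mem_Icc.2 hab) (right_mem_Icc.2 hab) hab
  linarith [norm_le_smoothed b]

lemma exp_mul_norm_sub_le_of_inner_deriv_le {g h : ℝ → ℝ} {a b c : ℝ} (hab : a ≤ b)
    (hu : ContinuousOn u (Icc a b)) (hu' : ∀ τ ∈ Ioo a b, HasDerivAt u (u' τ) τ)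
    (hh : ContinuousOn h (Icc a b))
    (hh' : ∀ τ ∈ Ioo a b, HasDerivAt h (Real.exp (c * τ) * g τ) τ)
    (hg : ∀ τ ∈ Ioo a b, 0 ≤ g τ)
    (hle : ∀ τ ∈ Ioo a b, ⟪u τ, u' τ⟫_ℝ ≤ (g τ - c * ‖u τ‖) * ‖u τ‖) :
    Real.exp (c * b) * ‖u b‖ - Real.exp (c * a) * ‖u a‖ ≤ h b - h a := by
  have hexp (τ : ℝ) : HasDerivAt (fun τ => Real.exp (c * τ)) (Real.exp (c * τ) * c) τ := by
    simpa using ((hasDerivAt_id τ).const_mul c).exp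
  have norm_weighted (τ : ℝ) : ‖Real.exp (c * τ) • u τ‖ = Real.exp (c * τ) * ‖u τ‖ := by
    rw [norm_smul, Real.norm_eq_abs, Real.abs_exp]
  rw [← norm_weighted, ← norm_weighted]
  refine norm_sub_norm_le_of_inner_deriv_le (u := fun τ => Real.exp (c * τ) • u τ) hab
    (ContinuousOn.smul (by fun_prop) hu) (fun τ hτ => (hexp τ).smul (hu' τ hτ)) hh hh'
    (fun τ hτ => mul_nonneg (Real.exp_pos _).le (hg τ hτ)) fun τ hτ => ?_
  calc ⟪Real.exp (c * τ) • u τ, Real.exp (c * τ) • u' τ + (Real.exp (c * τ) * c) • u τ⟫_ℝ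
      = Real.exp (c * τ) ^ 2 * (⟪u τ, u' τ⟫_ℝ + c * ‖u τ‖ * ‖u τ‖) := by
        simp only [inner_add_right, real_inner_smul_left, real_inner_smul_right,
          real_inner_self_eq_norm_mul_norm]
        ring
    _ ≤ Real.exp (c * τ) ^ 2 * (g τ * ‖u τ‖) := by
        gcongr
        linarith [hle τ hτ]
    _ = Real.exp (c * τ) * g τ * ‖Real.exp (c * τ) • u τ‖ := by
        rw [norm_weighted]; ring

lemma norm_le_add_mul_exp_neg_of_inner_deriv_le {a M t : ℝ} (ha : 0 ≤ a) (hM : 0 ≤ M)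
    (hu : ContinuousOn u (Icc 0 t)) (hu' : ∀ σ ∈ Ioo 0 t, HasDerivAt u (u' σ) σ)
    (hle : ∀ σ ∈ Ioo 0 t, ⟪u σ, u' σ⟫_ℝ ≤
      (M * (1 + a * σ) * Real.exp (-(a * σ)) - 2 * a * ‖u σ‖) * ‖u σ‖)
    {τ : ℝ} (hτ : τ ∈ Icc 0 t) :
    ‖u τ‖ ≤ (‖u 0‖ + M * τ) * Real.exp (-(a * τ)) := by
  have hexp_two (σ : ℝ) : Real.exp (2 * a * σ) = Real.exp (a * σ) * Real.exp (a * σ) := by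
    rw [← Real.exp_add]; ring_nf
  have hexp_neg (σ : ℝ) : Real.exp (a * σ) * Real.exp (-(a * σ)) = 1 := by
    rw [← Real.exp_add, add_neg_cancel, Real.exp_zero]
  have hprimitive (σ : ℝ) : HasDerivAt (fun σ => M * (σ * Real.exp (a * σ)))
      (Real.exp (2 * a * σ) * (M * (1 + a * σ) * Real.exp (-(a * σ)))) σ := by
    have hexp : HasDerivAt (fun σ => Real.exp (a * σ)) (Real.exp (a * σ) * a) σ := by
      simpa using ((hasDerivAt_id σ).const_mul a).exp
    refine (((hasDerivAt_id σ).mul hexp).const_mul M).congr_deriv ?_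
    rw [hexp_two, id]
    linear_combination -M * (1 + a * σ) * Real.exp (a * σ) * hexp_neg σ
  have hsub : Ioo 0 τ ⊆ Ioo 0 t := Ioo_subset_Ioo_right hτ.2
  have hweighted := exp_mul_norm_sub_le_of_inner_deriv_le hτ.1
    (hu.mono (Icc_subset_Icc_right hτ.2)) (fun σ hσ => hu' σ (hsub hσ))
    (fun σ _ => (hprimitive σ).continuousAt.continuousWithinAt) (fun σ _ => hprimitive σ)
    (fun σ hσ => by have := hσ.1.le; positivity) (fun σ hσ => hle σ (hsub hσ))
  simp only [mul_zero, zero_mul, Real.exp_zero, one_mul, sub_zero] at hweighted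
  have one_le_exp : 1 ≤ Real.exp (a * τ) := Real.one_le_exp (mul_nonneg ha hτ.1)
  have hgrowth : Real.exp (a * τ) * (Real.exp (a * τ) * ‖u τ‖) ≤
      Real.exp (a * τ) * (‖u 0‖ + M * τ) := by
    rw [← mul_assoc, ← hexp_two]
    nlinarith [norm_nonneg (u 0)]
  calc ‖u τ‖ = Real.exp (a * τ) * ‖u τ‖ * Real.exp (-(a * τ)) := by
        linear_combination -‖u τ‖ * hexp_neg τ
    _ ≤ (‖u 0‖ + M * τ) * Real.exp (-(a * τ)) := by
        gcongr
        exact le_of_mul_le_mul_left hgrowth (Real.exp_pos _)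

end Energy

lemma norm_iteratedFDerivWithin_bilinear_sub_le {E F G W : Type*}
    [NormedAddCommGroup E] [NormedSpace ℝ E] [NormedAddCommGroup F] [NormedSpace ℝ F]
    [NormedAddCommGroup G] [NormedSpace ℝ G] [NormedAddCommGroup W] [NormedSpace ℝ W]
    (B : F →L[ℝ] G →L[ℝ] W) {S : Set E} (hS : UniqueDiffOn ℝ S) {f : E → F} {g : E → G} {l : ℕ}
    (hf : ContDiffOn ℝ l f S) (hg : ContDiffOn ℝ l g S) {x : E} (hx : x ∈ S) :
    ‖iteratedFDerivWithin ℝ l (fun y => B (f y) (g y)) S x -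
        (B.flip (g x)).compContinuousMultilinearMap (iteratedFDerivWithin ℝ l f S x)‖ ≤
      ‖B‖ * ∑ j ∈ Finset.range l, (l.choose j : ℝ) * ‖iteratedFDerivWithin ℝ j f S x‖ *
        ‖iteratedFDerivWithin ℝ (l - j) g S x‖ := by
  -- Freezing `g` at `x` turns the top-order term into `B (f y) (g x)`, and the Leibniz rule
  -- for the remainder `B (f y) (g y - g x)` then has no term of order `l` in `f`.
  have hsub : ContDiffOn ℝ l (fun y => g y - g x) S := hg.sub contDiffOn_const
  have hfrozen : ContDiffOn ℝ l (B.flip (g x) ∘ f) S := (B.flip (g x)).contDiff.comp_contDiffOn hf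
  have hrem : ContDiffOn ℝ l (fun y => B (f y) (g y - g x)) S :=
    B.isBoundedBilinearMap.contDiff.comp_contDiffOn (hf.prodMk hsub)
  have hsplit : (fun y => B (f y) (g y)) = B.flip (g x) ∘ f + fun y => B (f y) (g y - g x) := by
    funext y
    simp
  rw [hsplit, iteratedFDerivWithin_add_apply (hfrozen x hx) (hrem x hx) hS hx,
    (B.flip (g x)).iteratedFDerivWithin_comp_left (hf x hx) hS hx le_rfl, add_sub_cancel_left]
  refine (B.norm_iteratedFDerivWithin_le_of_bilinear hf hsub hS hx le_rfl).trans_eq ?_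
  have htop : ‖iteratedFDerivWithin ℝ (l - l) (fun y => g y - g x) S x‖ = 0 := by
    rw [Nat.sub_self, norm_iteratedFDerivWithin_zero, sub_self, norm_zero]
  rw [Finset.sum_range_succ, htop, mul_zero, add_zero]
  congr 1
  refine Finset.sum_congr rfl fun j hj => ?_
  have hj' : l - j ≠ 0 := (Nat.sub_pos_of_lt (Finset.mem_range.1 hj)).ne'
  have hgj : ContDiffWithinAt ℝ (l - j : ℕ) g S x :=
    (hg x hx).of_le (by exact_mod_cast Nat.sub_le l j)
  rw [show (fun y => g y - g x) = g - fun _ => g x from rfl,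
    iteratedFDerivWithin_sub_apply hgj contDiffWithinAt_const hS hx,
    iteratedFDerivWithin_const_of_ne hj', Pi.zero_apply, sub_zero]

lemma mul_norm_sq_sub_le_inner_iteratedFDerivWithin_bilinear {E F H : Type*}
    [NormedAddCommGroup E] [NormedSpace ℝ E] [NormedAddCommGroup F] [NormedSpace ℝ F]
    [NormedAddCommGroup H] [InnerProductSpace ℝ H] (B : H →L[ℝ] F →L[ℝ] H) {S : Set E}
    (hS : UniqueDiffOn ℝ S) {f : E → H} {g : E → F} {l : ℕ} (hf : ContDiffOn ℝ l f S)
    (hg : ContDiffOn ℝ l g S) {x : E} (hx : x ∈ S) {c : ℝ}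
    (hcoer : ∀ v, c * ‖v‖ ^ 2 ≤ ⟪v, B v (g x)⟫_ℝ) (m : Fin l → E) :
    c * ‖iteratedFDerivWithin ℝ l f S x m‖ ^ 2 -
        ‖B‖ * (∑ j ∈ Finset.range l, (l.choose j : ℝ) * ‖iteratedFDerivWithin ℝ j f S x‖ *
          ‖iteratedFDerivWithin ℝ (l - j) g S x‖) * (∏ i, ‖m i‖) *
            ‖iteratedFDerivWithin ℝ l f S x m‖ ≤
      ⟪iteratedFDerivWithin ℝ l f S x m,
        iteratedFDerivWithin ℝ l (fun y => B (f y) (g y)) S x m⟫_ℝ := by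
  set U := iteratedFDerivWithin ℝ l f S x
  set D := iteratedFDerivWithin ℝ l (fun y => B (f y) (g y)) S x
  have hcomm := (D - (B.flip (g x)).compContinuousMultilinearMap U).le_of_opNorm_le
    (norm_iteratedFDerivWithin_bilinear_sub_le B hS hf hg hx) m
  have hsplit : ⟪U m, D m⟫_ℝ = ⟪U m, B (U m) (g x)⟫_ℝ +
      ⟪U m, (D - (B.flip (g x)).compContinuousMultilinearMap U) m⟫_ℝ := by
    simp [← inner_add_right]
  have hcauchy := (abs_le.1 (abs_real_inner_le_norm (U m)
    ((D - (B.flip (g x)).compContinuousMultilinearMap U) m))).1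
  rw [hsplit]
  linarith [hcoer (U m), mul_le_mul_of_nonneg_left hcomm (norm_nonneg (U m))]

/-- `K` solves the Cauchy problem `∂_τ K = -B(K, A)` on `[0, t] × S` with constant initial value
`k₀`, and `∂_τ` commutes with the derivatives of order at most `L` in the parameter. The bilinear
map `B` stands for the product `K·A` of matrices. -/
structure IsParabolicSolution {E F H : Type*} [NormedAddCommGroup E] [NormedSpace ℝ E]
    [NormedAddCommGroup F] [NormedSpace ℝ F] [NormedAddCommGroup H] [NormedSpace ℝ H]
    (B : H →L[ℝ] F →L[ℝ] H) (L : ℕ) (t : ℝ) (S : Set E) (A : ℝ → E → F) (K : ℝ → E → H) (k₀ : H) :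
    Prop where
  contDiffOn : ∀ τ ∈ Icc 0 t, ContDiffOn ℝ L (K τ) S
  continuousOn : ∀ l ≤ L, ∀ ξ ∈ S,
    ContinuousOn (fun τ => iteratedFDerivWithin ℝ l (K τ) S ξ) (Icc 0 t)
  initial : ∀ ξ ∈ S, K 0 ξ = k₀
  hasDerivAt : ∀ l ≤ L, ∀ ξ ∈ S, ∀ τ ∈ Ioo 0 t,
    HasDerivAt (fun τ => iteratedFDerivWithin ℝ l (K τ) S ξ)
      (-iteratedFDerivWithin ℝ l (fun ζ => B (K τ ζ) (A τ ζ)) S ξ) τ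

namespace IsParabolicSolution

variable {E F H : Type*} [NormedAddCommGroup E] [NormedSpace ℝ E]
  [NormedAddCommGroup F] [NormedSpace ℝ F] [NormedAddCommGroup H] [InnerProductSpace ℝ H]
  {B : H →L[ℝ] F →L[ℝ] H} {L : ℕ} {t : ℝ} {S : Set E} {A : ℝ → E → F} {K : ℝ → E → H} {k₀ : H}
  {ξ : E} {a ρ : ℝ}

lemma norm_iteratedFDerivWithin_initial_zero (hK : IsParabolicSolution B L t S A K k₀)
    (hξ : ξ ∈ S) : ‖iteratedFDerivWithin ℝ 0 (K 0) S ξ‖ = ‖k₀‖ := by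
  rw [norm_iteratedFDerivWithin_zero, hK.initial ξ hξ]

lemma iteratedFDerivWithin_initial (hK : IsParabolicSolution B L t S A K k₀) (hξ : ξ ∈ S)
    {l : ℕ} (hl : l ≠ 0) : iteratedFDerivWithin ℝ l (K 0) S ξ = 0 := by
  rw [iteratedFDerivWithin_congr hK.initial hξ, iteratedFDerivWithin_const_of_ne hl,
    Pi.zero_apply]

lemma norm_iteratedFDerivWithin_le_of_sum_le (hK : IsParabolicSolution B L t S A K k₀)
    (hB : ‖B‖ ≤ 1) (hS : UniqueDiffOn ℝ S) (hA : ∀ τ ∈ Icc 0 t, ContDiffOn ℝ L (A τ) S)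
    (hξ : ξ ∈ S) (ha : 0 ≤ a)
    (hcoer : ∀ τ ∈ Icc 0 t, ∀ v, 2 * a * ‖v‖ ^ 2 ≤ ⟪v, B v (A τ ξ)⟫_ℝ)
    {l : ℕ} (hl : l ≤ L) {M : ℝ} (hM : 0 ≤ M)
    (hsum : ∀ σ ∈ Ioo 0 t, ∑ j ∈ Finset.range l, (l.choose j : ℝ) *
      ‖iteratedFDerivWithin ℝ j (K σ) S ξ‖ * ‖iteratedFDerivWithin ℝ (l - j) (A σ) S ξ‖ ≤
        M * (1 + a * σ) * Real.exp (-(a * σ)))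
    {τ : ℝ} (hτ : τ ∈ Icc 0 t) :
    ‖iteratedFDerivWithin ℝ l (K τ) S ξ‖ ≤
      (‖iteratedFDerivWithin ℝ l (K 0) S ξ‖ + M * τ) * Real.exp (-(a * τ)) := by
  have hτ₀ := hτ.1
  refine ContinuousMultilinearMap.opNorm_le_bound (by positivity) fun m => ?_
  set p := ∏ i, ‖m i‖
  have hp : 0 ≤ p := Finset.prod_nonneg fun i _ => norm_nonneg (m i)
  have hinitial : ‖iteratedFDerivWithin ℝ l (K 0) S ξ m‖ ≤
      ‖iteratedFDerivWithin ℝ l (K 0) S ξ‖ * p := ContinuousMultilinearMap.le_opNorm _ m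
  have hcont : ContinuousOn (fun σ => iteratedFDerivWithin ℝ l (K σ) S ξ m) (Icc 0 t) :=
    (ContinuousMultilinearMap.apply ℝ (fun _ => E) H m).continuous.comp_continuousOn
      (hK.continuousOn l hl ξ hξ)
  have hderiv : ∀ σ ∈ Ioo 0 t, HasDerivAt (fun σ => iteratedFDerivWithin ℝ l (K σ) S ξ m)
      (-iteratedFDerivWithin ℝ l (fun ζ => B (K σ ζ) (A σ ζ)) S ξ m) σ := fun σ hσ =>
    (ContinuousMultilinearMap.apply ℝ (fun _ => E) H m).hasFDerivAt.comp_hasDerivAt σ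
      (hK.hasDerivAt l hl ξ hξ σ hσ)
  have henergy : ‖iteratedFDerivWithin ℝ l (K τ) S ξ m‖ ≤
      (‖iteratedFDerivWithin ℝ l (K 0) S ξ m‖ + M * p * τ) * Real.exp (-(a * τ)) := by
    refine norm_le_add_mul_exp_neg_of_inner_deriv_le ha (mul_nonneg hM hp) hcont hderiv
      (fun σ hσ => ?_) hτ
    have hσ' := Ioo_subset_Icc_self hσ
    have hdissip := mul_norm_sq_sub_le_inner_iteratedFDerivWithin_bilinear B hS
      ((hK.contDiffOn σ hσ').of_le (by exact_mod_cast hl))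
      ((hA σ hσ').of_le (by exact_mod_cast hl)) hξ (hcoer σ hσ') m
    have hforcing := (mul_le_of_le_one_left (by positivity) hB).trans (hsum σ hσ)
    have hforcing_apply := mul_le_mul_of_nonneg_right (mul_le_mul_of_nonneg_right hforcing hp)
      (norm_nonneg (iteratedFDerivWithin ℝ l (K σ) S ξ m))
    rw [inner_neg_right]
    linarith
  refine henergy.trans ?_
  calc (‖iteratedFDerivWithin ℝ l (K 0) S ξ m‖ + M * p * τ) * Real.exp (-(a * τ))
      ≤ (‖iteratedFDerivWithin ℝ l (K 0) S ξ‖ * p + M * p * τ) * Real.exp (-(a * τ)) := by gcongr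
    _ = _ := by ring

lemma norm_iteratedFDerivWithin_le_of_lt (hK : IsParabolicSolution B L t S A K k₀)
    (hB : ‖B‖ ≤ 1) (hS : UniqueDiffOn ℝ S) (hA : ∀ τ ∈ Icc 0 t, ContDiffOn ℝ L (A τ) S)
    (hξ : ξ ∈ S) (ha : 0 ≤ a) (hρ : 0 ≤ ρ)
    (hcoer : ∀ τ ∈ Icc 0 t, ∀ v, 2 * a * ‖v‖ ^ 2 ≤ ⟪v, B v (A τ ξ)⟫_ℝ)
    (hbound : ∀ k, 1 ≤ k → k ≤ L → ∀ τ ∈ Icc 0 t,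
      ‖iteratedFDerivWithin ℝ k (A τ) S ξ‖ ≤ 2 * a * ρ ^ k)
    {l : ℕ} (hl : l ≤ L)
    (hlt : ∀ j < l, ∀ σ ∈ Icc 0 t, ‖iteratedFDerivWithin ℝ j (K σ) S ξ‖ ≤
      ‖k₀‖ * j ! * (3 * ρ) ^ j * (1 + a * σ) * Real.exp (-(a * σ)))
    {τ : ℝ} (hτ : τ ∈ Icc 0 t) :
    ‖iteratedFDerivWithin ℝ l (K τ) S ξ‖ ≤
      (‖iteratedFDerivWithin ℝ l (K 0) S ξ‖ + ‖k₀‖ * l ! * (3 * ρ) ^ l * a * τ) *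
        Real.exp (-(a * τ)) := by
  refine hK.norm_iteratedFDerivWithin_le_of_sum_le hB hS hA hξ ha hcoer hl (by positivity)
    (fun σ hσ => ?_) hτ
  have hσ' := Ioo_subset_Icc_self hσ
  have hσ₀ := hσ'.1
  refine (sum_choose_mul_le_of_le_factorial_mul_pow (γ := 2 * a)
    (β := ‖k₀‖ * (1 + a * σ) * Real.exp (-(a * σ))) (by positivity) (by positivity) hρ
    (f := fun j => ‖iteratedFDerivWithin ℝ j (K σ) S ξ‖)
    (g := fun k => ‖iteratedFDerivWithin ℝ k (A σ) S ξ‖)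
    (fun j hj => (hlt j hj σ hσ').trans_eq (by ring)) (fun k => norm_nonneg _)
    fun k hk hkl => hbound k hk (hkl.trans hl) σ hσ').trans_eq ?_
  ring

lemma norm_iteratedFDerivWithin_le_one_add_mul_exp (hK : IsParabolicSolution B L t S A K k₀)
    (hB : ‖B‖ ≤ 1) (hS : UniqueDiffOn ℝ S) (hA : ∀ τ ∈ Icc 0 t, ContDiffOn ℝ L (A τ) S)
    (hξ : ξ ∈ S) (ha : 0 ≤ a) (hρ : 0 ≤ ρ)
    (hcoer : ∀ τ ∈ Icc 0 t, ∀ v, 2 * a * ‖v‖ ^ 2 ≤ ⟪v, B v (A τ ξ)⟫_ℝ)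
    (hbound : ∀ k, 1 ≤ k → k ≤ L → ∀ τ ∈ Icc 0 t,
      ‖iteratedFDerivWithin ℝ k (A τ) S ξ‖ ≤ 2 * a * ρ ^ k)
    {l : ℕ} (hl : l ≤ L) {τ : ℝ} (hτ : τ ∈ Icc 0 t) :
    ‖iteratedFDerivWithin ℝ l (K τ) S ξ‖ ≤
      ‖k₀‖ * l ! * (3 * ρ) ^ l * (1 + a * τ) * Real.exp (-(a * τ)) := by
  induction l using Nat.strong_induction_on generalizing τ with
  | _ l ih =>
    have hinitial : ‖iteratedFDerivWithin ℝ l (K 0) S ξ‖ ≤ ‖k₀‖ * l ! * (3 * ρ) ^ l := by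
      rcases eq_or_ne l 0 with rfl | hl₀
      · simp [hK.norm_iteratedFDerivWithin_initial_zero hξ]
      · rw [hK.iteratedFDerivWithin_initial hξ hl₀, norm_zero]
        positivity
    refine (hK.norm_iteratedFDerivWithin_le_of_lt hB hS hA hξ ha hρ hcoer hbound hl
      (fun j hj σ hσ => ih j hj (hj.le.trans hl) hσ) hτ).trans ?_
    gcongr
    linarith

theorem norm_iteratedFDerivWithin_le_mul_exp (hK : IsParabolicSolution B L t S A K k₀)
    (hB : ‖B‖ ≤ 1) (hS : UniqueDiffOn ℝ S) (hA : ∀ τ ∈ Icc 0 t, ContDiffOn ℝ L (A τ) S)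
    (hξ : ξ ∈ S) (ha : 0 ≤ a) (hρ : 0 ≤ ρ)
    (hcoer : ∀ τ ∈ Icc 0 t, ∀ v, 2 * a * ‖v‖ ^ 2 ≤ ⟪v, B v (A τ ξ)⟫_ℝ)
    (hbound : ∀ k, 1 ≤ k → k ≤ L → ∀ τ ∈ Icc 0 t,
      ‖iteratedFDerivWithin ℝ k (A τ) S ξ‖ ≤ 2 * a * ρ ^ k)
    {l : ℕ} (hl₁ : 1 ≤ l) (hl : l ≤ L) {τ : ℝ} (hτ : τ ∈ Icc 0 t) :
    ‖iteratedFDerivWithin ℝ l (K τ) S ξ‖ ≤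
      ‖k₀‖ * l ! * (3 * ρ) ^ l * a * τ * Real.exp (-(a * τ)) := by
  simpa only [hK.iteratedFDerivWithin_initial hξ (Nat.one_le_iff_ne_zero.1 hl₁), norm_zero,
    zero_add] using
    hK.norm_iteratedFDerivWithin_le_of_lt hB hS hA hξ ha hρ hcoer hbound hl
      (fun j hj σ hσ => hK.norm_iteratedFDerivWithin_le_one_add_mul_exp hB hS hA hξ ha hρ hcoer
        hbound (hj.le.trans hl) hσ) hτ

end IsParabolicSolution

theorem xi_derivative_fundamental_solution_bound_general {E F H : Type*}
    [NormedAddCommGroup E] [NormedSpace ℝ E] [NormedAddCommGroup F] [NormedSpace ℝ F]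
    [NormedAddCommGroup H] [InnerProductSpace ℝ H] {B : H →L[ℝ] F →L[ℝ] H} (hB : ‖B‖ ≤ 1)
    {L : ℕ} {s c₀ c₁ t : ℝ} (hc₀ : 0 < c₀) (hc₀₁ : c₀ ≤ c₁) {A : ℝ → E → F} {K : ℝ → E → H}
    {k₀ : H} (hA : ∀ τ ∈ Icc 0 t, ContDiffOn ℝ L (A τ) {0}ᶜ)
    (hcoer : ∀ τ ∈ Icc 0 t, ∀ ξ : E, ξ ≠ 0 → ∀ v,
      c₀ * ‖ξ‖ ^ s * ‖v‖ ^ 2 ≤ ⟪v, B v (A τ ξ)⟫_ℝ)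
    (hbound : ∀ k, 1 ≤ k → k ≤ L → ∀ τ ∈ Icc 0 t, ∀ ξ : E, ξ ≠ 0 →
      ‖iteratedFDerivWithin ℝ k (A τ) {0}ᶜ ξ‖ ≤ c₁ * ‖ξ‖ ^ (s - (k : ℝ)))
    (hK : IsParabolicSolution B L t {0}ᶜ A K k₀) {l : ℕ} (hl₁ : 1 ≤ l) (hl : l ≤ L)
    {τ : ℝ} (hτ : τ ∈ Icc 0 t) {ξ : E} (hξ : ξ ≠ 0) :
    ‖iteratedFDerivWithin ℝ l (K τ) {0}ᶜ ξ‖ ≤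
      ‖k₀‖ * (l ! * 3 ^ l / 2) * c₀ * (c₁ / c₀) ^ l * τ * ‖ξ‖ ^ (s - (l : ℝ)) *
        Real.exp (-(c₀ / 2) * τ * ‖ξ‖ ^ s) := by
  have hr : 0 < ‖ξ‖ := norm_pos_iff.2 hξ
  have hrpow (k : ℕ) : ‖ξ‖ ^ (s - (k : ℝ)) = ‖ξ‖ ^ s / ‖ξ‖ ^ k := Real.rpow_sub_natCast hr.ne' s k
  have hratio : 1 ≤ c₁ / c₀ := (one_le_div hc₀).2 hc₀₁
  have hc₁ (k : ℕ) (hk : 1 ≤ k) : c₁ ≤ c₀ * (c₁ / c₀) ^ k :=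
    calc c₁ = c₀ * (c₁ / c₀) := (mul_div_cancel₀ c₁ hc₀.ne').symm
      _ ≤ c₀ * (c₁ / c₀) ^ k := by gcongr; exact le_self_pow₀ hratio (by lia)
  have key := hK.norm_iteratedFDerivWithin_le_mul_exp hB isOpen_compl_singleton.uniqueDiffOn hA hξ
    (a := c₀ * ‖ξ‖ ^ s / 2) (ρ := c₁ / c₀ / ‖ξ‖) (by positivity) (by positivity)
    (fun σ hσ v => (hcoer σ hσ ξ hξ v).trans_eq' (by ring)) (fun k hk hkL σ hσ => ?_) hl₁ hl hτ
  · refine key.trans_eq ?_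
    rw [hrpow]
    ring_nf
  · calc ‖iteratedFDerivWithin ℝ k (A σ) {0}ᶜ ξ‖ ≤ c₁ * ‖ξ‖ ^ (s - (k : ℝ)) :=
          hbound k hk hkL σ hσ ξ hξ
      _ ≤ c₀ * (c₁ / c₀) ^ k * ‖ξ‖ ^ (s - (k : ℝ)) := by gcongr; exact hc₁ k hk
      _ = 2 * (c₀ * ‖ξ‖ ^ s / 2) * (c₁ / c₀ / ‖ξ‖) ^ k := by rw [hrpow, div_pow _ ‖ξ‖]; ring

/-- The inner product `⟪M, P⟫ = ∑ i, ∑ j, M i j * P i j` on real matrices, whose norm is the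
Frobenius norm. -/
noncomputable abbrev frobeniusInnerProductSpace (m n : Type*) [Fintype m] [Fintype n] :
    InnerProductSpace ℝ (Matrix m n ℝ) where
  inner M P := ∑ i, ∑ j, M i j * P i j
  norm_sq_eq_re_inner M := by
    have hsum : 0 ≤ ∑ i, ∑ j, M i j * M i j :=
      Finset.sum_nonneg fun i _ => Finset.sum_nonneg fun j _ => mul_self_nonneg _
    rw [Matrix.frobenius_norm_def, ← Real.sqrt_eq_rpow]
    simp only [Real.rpow_two, Real.norm_eq_abs, sq_abs, RCLike.re_to_real]
    simp only [sq (M _ _), Real.sq_sqrt hsum]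
  conj_inner_symm M P := by simp [mul_comm]
  add_left M P Q := by simp [add_mul, Finset.sum_add_distrib]
  smul_left M P r := by simp [Finset.mul_sum, mul_assoc]

section Frobenius

attribute [local instance] frobeniusInnerProductSpace

lemma mul_frobenius_norm_sq_le_inner_mul {m n : Type*} [Fintype m] [Fintype n] {c : ℝ}
    {M : Matrix n n ℝ} (hM : ∀ v : n → ℝ, c * ∑ i, v i ^ 2 ≤ ∑ i, ∑ j, v i * M i j * v j)
    (U : Matrix m n ℝ) : c * ‖U‖ ^ 2 ≤ ⟪U, U * M⟫_ℝ := by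
  calc c * ‖U‖ ^ 2 = ∑ k, c * ∑ i, U k i ^ 2 := by
        rw [← real_inner_self_eq_norm_sq, ← Finset.mul_sum]
        simp only [inner, sq]
    _ ≤ ∑ k, ∑ i, ∑ j, U k i * M i j * U k j := Finset.sum_le_sum fun k _ => hM (U k)
    _ = ⟪U, U * M⟫_ℝ := by
        simp only [inner, Matrix.mul_apply, Finset.mul_sum]
        refine Finset.sum_congr rfl fun k _ => Finset.sum_comm.trans ?_
        exact Finset.sum_congr rfl fun j _ => Finset.sum_congr rfl fun i _ => by ring

end Frobenius

/-- Bounds for the `ξ`-derivatives of the (time-reversed) Fourier transform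
`𝒦` of the fundamental solution of a coercive parabolic system of order `s`. -/
theorem xi_derivative_fundamental_solution_bound
    (d N : ℕ) (hd : 1 ≤ d) (hN : 1 ≤ N) (s : ℝ) (hs : 0 < s)
    (l : ℕ) (hl1 : 1 ≤ l) (hlL : l ≤ d + Nat.floor s + 2) :
    ∃ C : ℝ, 0 < C ∧
      ∀ c₀ c₁ t : ℝ, 0 < c₀ → c₀ < 1 → 1 < c₁ → 0 < t →
      ∀ A 𝒦 : ℝ → EuclideanSpace ℝ (Fin d) → Matrix (Fin N) (Fin N) ℝ,
        -- A is jointly continuous on [0,t] × (ℝ^d \ {0})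
        ContinuousOn (fun p : ℝ × EuclideanSpace ℝ (Fin d) => A p.1 p.2)
          (Icc 0 t ×ˢ {0}ᶜ) →
        -- A is L-times continuously differentiable in ξ
        (∀ τ ∈ Icc (0 : ℝ) t, ContDiffOn ℝ (d + Nat.floor s + 2) (A τ) {0}ᶜ) →
        -- the ξ-derivatives of A are jointly continuous
        (∀ l' : ℕ, l' ≤ d + Nat.floor s + 2 →
          ContinuousOn (fun p : ℝ × EuclideanSpace ℝ (Fin d) =>
              iteratedFDerivWithin ℝ l' (A p.1) {0}ᶜ p.2)
            (Icc 0 t ×ˢ {0}ᶜ)) →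
        -- (i) coercivity of A
        (∀ τ ∈ Icc (0 : ℝ) t, ∀ ξ : EuclideanSpace ℝ (Fin d), ξ ≠ 0 →
          ∀ v : Fin N → ℝ,
            c₀ * ‖ξ‖ ^ s * (∑ i, (v i) ^ 2) ≤ ∑ i, ∑ j, v i * A τ ξ i j * v j) →
        -- (ii) symbol-type bounds for the ξ-derivatives of A
        (∀ l' : ℕ, l' ≤ d + Nat.floor s + 2 → ∀ τ ∈ Icc (0 : ℝ) t,
          ∀ ξ : EuclideanSpace ℝ (Fin d), ξ ≠ 0 →
            ‖iteratedFDerivWithin ℝ l' (A τ) {0}ᶜ ξ‖ ≤ c₁ * ‖ξ‖ ^ (s - (l' : ℝ))) →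
        -- 𝒦 is L-times continuously differentiable in ξ
        (∀ τ ∈ Icc (0 : ℝ) t, ContDiffOn ℝ (d + Nat.floor s + 2) (𝒦 τ) {0}ᶜ) →
        -- 𝒦 and its ξ-derivatives are jointly continuous
        (∀ l' : ℕ, l' ≤ d + Nat.floor s + 2 →
          ContinuousOn (fun p : ℝ × EuclideanSpace ℝ (Fin d) =>
              iteratedFDerivWithin ℝ l' (𝒦 p.1) {0}ᶜ p.2)
            (Icc 0 t ×ˢ {0}ᶜ)) →
        -- initial condition
        (∀ ξ : EuclideanSpace ℝ (Fin d), ξ ≠ 0 → 𝒦 0 ξ = 1) →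
        -- evolution equation for the ξ-derivatives: ∂_τ(∇_ξ^l 𝒦) = −∇_ξ^l(𝒦·A)
        (∀ l' : ℕ, l' ≤ d + Nat.floor s + 2 →
          ∀ ξ : EuclideanSpace ℝ (Fin d), ξ ≠ 0 → ∀ τ ∈ Ioo (0 : ℝ) t,
            HasDerivAt (fun τ' => iteratedFDerivWithin ℝ l' (𝒦 τ') {0}ᶜ ξ)
              (-(iteratedFDerivWithin ℝ l' (fun ζ => 𝒦 τ ζ * A τ ζ) {0}ᶜ ξ)) τ) →
        -- conclusion
        ∀ τ ∈ Ioc (0 : ℝ) t, ∀ ξ : EuclideanSpace ℝ (Fin d), ξ ≠ 0 →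
          ‖iteratedFDerivWithin ℝ l (𝒦 τ) {0}ᶜ ξ‖ ≤
            C * c₀⁻¹ ^ l * c₁ ^ l * τ * ‖ξ‖ ^ (s - (l : ℝ)) *
              Real.exp (-(c₀ / 2) * τ * ‖ξ‖ ^ s) := by
  let := frobeniusInnerProductSpace (Fin N) (Fin N)
  let := Matrix.frobeniusNormedRing (m := Fin N) (α := ℝ)
  let := Matrix.frobeniusNormedAlgebra (m := Fin N) (R := ℝ) (α := ℝ)
  refine ⟨‖(1 : Matrix (Fin N) (Fin N) ℝ)‖ * (l ! * 3 ^ l / 2), ?_, ?_⟩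
  · have : Nonempty (Fin N) := Fin.pos_iff_nonempty.1 hN
    have : 0 < ‖(1 : Matrix (Fin N) (Fin N) ℝ)‖ := norm_pos_iff.2 one_ne_zero
    positivity
  intro c₀ c₁ t hc₀ hc₀1 hc₁ _ A 𝒦 _ hA _ hcoer hbound h𝒦 h𝒦cont h𝒦0 h𝒦deriv τ hτ ξ hξ
  have hsol : IsParabolicSolution (ContinuousLinearMap.mul ℝ (Matrix (Fin N) (Fin N) ℝ))
      (d + Nat.floor s + 2) t {0}ᶜ A 𝒦 1 :=
    { contDiffOn := by exact_mod_cast h𝒦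
      continuousOn := fun l' hl' ζ hζ => (h𝒦cont l' hl').comp (f := fun τ => (τ, ζ))
        (by fun_prop) fun τ hτ => ⟨hτ, hζ⟩
      initial := h𝒦0
      hasDerivAt := h𝒦deriv }
  refine (xi_derivative_fundamental_solution_bound_general
    (ContinuousLinearMap.opNorm_mul_le ℝ (Matrix (Fin N) (Fin N) ℝ)) hc₀ (hc₀1.trans hc₁).le
    (by exact_mod_cast hA)
    (fun σ hσ ζ hζ => mul_frobenius_norm_sq_le_inner_mul (hcoer σ hσ ζ hζ))
    (fun k _ => hbound k) hsol hl1 hlL (Ioc_subset_Icc_self hτ) hξ).trans ?_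
  have hτ₀ := hτ.1.le
  rw [div_eq_inv_mul c₁, mul_pow, ← mul_assoc _ (c₀⁻¹ ^ l)]
  gcongr ?_ * _ * _ * _ * _ * _
  exact mul_le_of_le_one_right (by positivity) hc₀1.le
end
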